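/- A BIBS system is OLIOS if and only if it admits an OLIOS-Lyapunov function. -/

import Mathlib

open MeasureTheory Set Filter Topology
open scoped ENNReal NNReal

noncomputable section

/-- A function of class `K`: continuous, strictly increasing on `[0,∞)` and vanishing at `0`. -/
def IsClassK (α : ℝ → ℝ) : Prop :=
  ContinuousOn α (Ici 0) ∧ StrictMonoOn α (Ici 0) ∧ α 0 = 0

/-- A function of class `K∞`: class `K` and unbounded. -/
def IsClassKInfty (α : ℝ → ℝ) : Prop :=
  IsClassK α ∧ Tendsto α atTop atTop

/-- A function of class `KL`. -/
def IsClassKL (β : ℝ → ℝ → ℝ) : Prop :=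
  (∀ t ∈ Ici (0:ℝ), IsClassK fun s => β s t) ∧
  ∀ s ∈ Ici (0:ℝ), AntitoneOn (fun t => β s t) (Ici 0) ∧
    Tendsto (fun t => β s t) atTop (𝓝 0)

/-- Admissible inputs: measurable and locally essentially bounded on `[0,∞)`. -/
def IsInput {m : ℕ} (u : ℝ → EuclideanSpace ℝ (Fin m)) : Prop :=
  Measurable u ∧ ∀ T > (0:ℝ), ∃ C : ℝ, ∀ᵐ t ∂(volume.restrict (Icc 0 T)), ‖u t‖ ≤ C

/-- The essential supremum norm of an input over `[0,∞)`, as an extended nonnegative real. -/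
def uNormE {m : ℕ} (u : ℝ → EuclideanSpace ℝ (Fin m)) : ℝ≥0∞ :=
  essSup (fun t => (‖u t‖₊ : ℝ≥0∞)) (volume.restrict (Ici 0))

/-- An input which is (globally) essentially bounded on `[0,∞)`. -/
def BddInput {m : ℕ} (u : ℝ → EuclideanSpace ℝ (Fin m)) : Prop := uNormE u ≠ ⊤

/-- The essential supremum norm `‖u‖` of an input, as a real number. -/
def uNorm {m : ℕ} (u : ℝ → EuclideanSpace ℝ (Fin m)) : ℝ := (uNormE u).toReal

/-- `x` is the solution map of the forward-complete system `ẋ = f(x,u)`: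
for every initial state `ξ` and admissible input `u`, `t ↦ x t ξ u` solves the corresponding
integral equation on all of `[0,∞)`. -/
def IsSolutionMap {n m : ℕ}
    (f : EuclideanSpace ℝ (Fin n) → EuclideanSpace ℝ (Fin m) → EuclideanSpace ℝ (Fin n))
    (x : ℝ → EuclideanSpace ℝ (Fin n) → (ℝ → EuclideanSpace ℝ (Fin m)) →
      EuclideanSpace ℝ (Fin n)) : Prop :=
  ∀ ξ u, IsInput u → ∀ t ∈ Ici (0:ℝ),
    x t ξ u = ξ + ∫ s in (0:ℝ)..t, f (x s ξ u) (u s)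

/-- The system is bounded-input bounded-state (BIBS): it is forward complete (encoded by the
solution-map property) and trajectories are bounded in terms of a class-`K` function of the
initial state and of the input norm. -/
def IsBIBS {n m : ℕ}
    (f : EuclideanSpace ℝ (Fin n) → EuclideanSpace ℝ (Fin m) → EuclideanSpace ℝ (Fin n))
    (x : ℝ → EuclideanSpace ℝ (Fin n) → (ℝ → EuclideanSpace ℝ (Fin m)) →
      EuclideanSpace ℝ (Fin n)) : Prop :=
  IsSolutionMap f x ∧ ∃ σ : ℝ → ℝ, IsClassK σ ∧ ∀ ξ u, IsInput u → BddInput u →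
    ∀ t ∈ Ici (0:ℝ), ‖x t ξ u‖ ≤ max (σ ‖ξ‖) (σ (uNorm u))

/-- Input-to-output stability (IOS). -/
def IsIOS {n m p : ℕ}
    (h : EuclideanSpace ℝ (Fin n) → EuclideanSpace ℝ (Fin p))
    (x : ℝ → EuclideanSpace ℝ (Fin n) → (ℝ → EuclideanSpace ℝ (Fin m)) →
      EuclideanSpace ℝ (Fin n)) : Prop :=
  ∃ β γ, IsClassKL β ∧ IsClassK γ ∧ ∀ ξ u, IsInput u → BddInput u →
    ∀ t ∈ Ici (0:ℝ), ‖h (x t ξ u)‖ ≤ max (β ‖ξ‖ t) (γ (uNorm u))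

/-- Output-Lagrange input-to-output stability (OLIOS): IOS together with an output-Lagrange
estimate. -/
def IsOLIOS {n m p : ℕ}
    (h : EuclideanSpace ℝ (Fin n) → EuclideanSpace ℝ (Fin p))
    (x : ℝ → EuclideanSpace ℝ (Fin n) → (ℝ → EuclideanSpace ℝ (Fin m)) →
      EuclideanSpace ℝ (Fin n)) : Prop :=
  IsIOS h x ∧ ∃ σ₀ : ℝ → ℝ, IsClassK σ₀ ∧ ∀ ξ u, IsInput u → BddInput u →
    ∀ t ∈ Ici (0:ℝ), ‖h (x t ξ u)‖ ≤ max (σ₀ ‖h ξ‖) (σ₀ (uNorm u))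

/-- An OLIOS-Lyapunov function for the system `ẋ = f(x,u)`, `y = h(x)`. -/
def IsOLIOSLyapunov {n m p : ℕ}
    (f : EuclideanSpace ℝ (Fin n) → EuclideanSpace ℝ (Fin m) → EuclideanSpace ℝ (Fin n))
    (h : EuclideanSpace ℝ (Fin n) → EuclideanSpace ℝ (Fin p))
    (V : EuclideanSpace ℝ (Fin n) → ℝ) : Prop :=
  ContDiff ℝ (⊤:ℕ∞) V ∧ (∀ ξ, 0 ≤ V ξ) ∧
  (∃ α₁ α₂ : ℝ → ℝ, IsClassKInfty α₁ ∧ IsClassKInfty α₂ ∧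
    ∀ ξ, α₁ ‖h ξ‖ ≤ V ξ ∧ V ξ ≤ α₂ ‖h ξ‖) ∧
  ∃ χ : ℝ → ℝ, IsClassK χ ∧ ∃ α₃ : ℝ → ℝ → ℝ,
    (∀ r ∈ Ici (0:ℝ), IsClassK fun s => α₃ s r) ∧
    (∀ s ∈ Ici (0:ℝ), AntitoneOn (fun r => α₃ s r) (Ici 0)) ∧
    ∀ ξ μ, χ ‖μ‖ ≤ V ξ → fderiv ℝ V ξ (f ξ μ) ≤ -α₃ (V ξ) ‖ξ‖

/-!
If `V` is a Lyapunov function, then `V` cannot increase along a trajectory while it exceeds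
`χ ‖u‖`. Hence the sublevel set at that level is forward invariant, and it attracts trajectories
uniformly on balls, because the BIBS estimate confines them to a ball on which the decay rate
depends on `V` alone. The resulting convergence times are turned into a class-`KL` estimate.

Conversely, maximise over all times and inputs the excess of the output over a gain `γ ‖u‖`,
multiplied by an increasing weight with values in `[1, 2)`. This value function lies between `‖h‖`
and a class-`K` function of `‖h‖`, is locally Lipschitz away from its zero set, and decreases
strictly along trajectories with small inputs, since the weight rewards late outputs. Its truncation
`max · r` at a positive level `r` is locally Lipschitz everywhere; a mollification whose radius
depends on the state keeps the decrease, and cutting off below the level yields smooth functions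
that are nonincreasing even where the value function is not Lipschitz. Summing these for
`r = 2⁻ᵏ` with rapidly decreasing weights gives a smooth `V`, and compactness of the set of states
and inputs on which it must decrease provides the decay rate.
-/

/-! ### Comparison functions -/

namespace IsClassK

variable {α β : ℝ → ℝ}

lemma nonneg (hα : IsClassK α) {s : ℝ} (hs : 0 ≤ s) : 0 ≤ α s :=
  hα.2.2.symm.le.trans (hα.2.1.monotoneOn self_mem_Ici hs hs)

lemma pos (hα : IsClassK α) {s : ℝ} (hs : 0 < s) : 0 < α s :=
  hα.2.2.symm.le.trans_lt (hα.2.1 self_mem_Ici hs.le hs)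

lemma mono (hα : IsClassK α) {s t : ℝ} (hs : 0 ≤ s) (hst : s ≤ t) : α s ≤ α t :=
  hα.2.1.monotoneOn hs (hs.trans hst) hst

lemma map_max (hα : IsClassK α) {s t : ℝ} (hs : 0 ≤ s) (ht : 0 ≤ t) :
    α (max s t) = max (α s) (α t) :=
  hα.2.1.monotoneOn.map_max hs ht

lemma tendsto_zero (hα : IsClassK α) : Tendsto α (𝓝[≥] 0) (𝓝 0) := by
  simpa only [ContinuousWithinAt, hα.2.2] using hα.1 0 self_mem_Ici

lemma add (hα : IsClassK α) (hβ : IsClassK β) : IsClassK fun s => α s + β s :=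
  ⟨hα.1.add hβ.1, fun _ ha _ hb hab => add_lt_add (hα.2.1 ha hb hab) (hβ.2.1 ha hb hab),
    by simp [hα.2.2, hβ.2.2]⟩

lemma const_mul (hα : IsClassK α) {c : ℝ} (hc : 0 < c) : IsClassK fun s => c * α s :=
  ⟨continuousOn_const.mul hα.1,
    fun _ ha _ hb hab => mul_lt_mul_of_pos_left (hα.2.1 ha hb hab) hc, by simp [hα.2.2]⟩

lemma comp (hα : IsClassK α) (hβ : IsClassK β) : IsClassK fun s => α (β s) :=
  ⟨hα.1.comp hβ.1 fun _ hs => hβ.nonneg hs,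
    fun _ ha _ hb hab => hα.2.1 (hβ.nonneg ha) (hβ.nonneg hb) (hβ.2.1 ha hb hab),
    by simp [hα.2.2, hβ.2.2]⟩

lemma id : IsClassK fun s => s :=
  ⟨continuousOn_id, fun _ _ _ _ hab => hab, rfl⟩

lemma add_id (hα : IsClassK α) : IsClassKInfty fun s => α s + s := by
  refine ⟨hα.add id, tendsto_atTop_mono' _ ?_ tendsto_id⟩
  filter_upwards [eventually_ge_atTop 0] with s hs using le_add_of_nonneg_left (hα.nonneg hs)

end IsClassK

lemma IsClassKL.comp_left {ρ : ℝ → ℝ} {β : ℝ → ℝ → ℝ} (hβ : IsClassKL β) (hρ : IsClassK ρ) :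
    IsClassKL fun s t => ρ (β s t) := by
  refine ⟨fun t ht => hρ.comp (hβ.1 t ht), fun s hs => ⟨fun t ht t' ht' htt' => ?_, ?_⟩⟩
  · exact hρ.mono ((hβ.1 t' ht').nonneg hs) ((hβ.2 s hs).1 ht ht' htt')
  · refine hρ.tendsto_zero.comp (tendsto_nhdsWithin_iff.2 ⟨(hβ.2 s hs).2, ?_⟩)
    filter_upwards [eventually_ge_atTop 0] with t ht using (hβ.1 t ht).nonneg hs

lemma IsClassKInfty.image_Ici {α : ℝ → ℝ} (hα : IsClassKInfty α) : α '' Ici 0 = Ici 0 := by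
  refine Subset.antisymm (image_subset_iff.2 fun s hs => hα.1.nonneg hs) fun y hy => ?_
  obtain ⟨b, hyb, hb⟩ := ((hα.2.eventually_ge_atTop y).and (eventually_ge_atTop 0)).exists
  exact image_mono Icc_subset_Ici_self
    (intermediate_value_Icc hb (hα.1.1.mono Icc_subset_Ici_self) ⟨hα.1.2.2.trans_le hy, hyb⟩)

lemma IsClassKInfty.exists_isClassK_leftInvOn {α : ℝ → ℝ} (hα : IsClassKInfty α) :
    ∃ ρ, IsClassK ρ ∧ LeftInvOn ρ α (Ici 0) := by
  let e : Ici (0 : ℝ) ≃o Ici (0 : ℝ) :=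
    (hα.1.2.1.orderIso α (Ici 0)).trans (OrderIso.setCongr _ _ hα.image_Ici)
  have he : ∀ s : Ici (0 : ℝ), (e s : ℝ) = α s := fun _ => rfl
  have hproj : ∀ {s : ℝ} (hs : 0 ≤ s), projIci 0 s = ⟨s, hs⟩ := fun hs => projIci_of_mem hs
  refine ⟨fun s => e.symm (projIci 0 s), ⟨?_, fun s hs t ht hst => ?_, ?_⟩, fun s hs => ?_⟩
  · have hc : Continuous (projIci (0 : ℝ)) :=
      (continuous_const.max continuous_id).subtype_mk fun _ => le_max_left _ _
    exact (continuous_subtype_val.comp (e.symm.continuous.comp hc)).continuousOn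
  · simpa [hproj hs, hproj ht] using hst
  · have h0 : e ⟨0, self_mem_Ici⟩ = ⟨0, self_mem_Ici⟩ := Subtype.ext ((he _).trans hα.1.2.2)
    simp only [hproj le_rfl, e.symm_apply_eq.2 h0.symm]
  · have hs' : projIci 0 (α s) = e ⟨s, hs⟩ := hproj (hα.1.nonneg hs)
    simp only [hs', e.symm_apply_apply]

/-- The average of `g` over `[r, 2r]`: a continuous majorant of a monotone function. -/
def dyadicAvg (g : ℝ → ℝ) (r : ℝ) : ℝ := ∫ τ in (1 : ℝ)..2, g (r * τ)

section dyadicAvg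

variable {g : ℝ → ℝ} {r : ℝ}

lemma intervalIntegrable_comp_mul_left (hg : Monotone g) (hr : 0 ≤ r) (a b : ℝ) :
    IntervalIntegrable (fun τ => g (r * τ)) volume a b :=
  (hg.comp (monotone_id.const_mul hr)).intervalIntegrable

lemma le_dyadicAvg (hg : Monotone g) (hr : 0 ≤ r) : g r ≤ dyadicAvg g r := by
  have h : ∫ _ in (1 : ℝ)..2, g r ≤ dyadicAvg g r :=
    intervalIntegral.integral_mono_on one_le_two intervalIntegrable_const
      (intervalIntegrable_comp_mul_left hg hr 1 2) fun τ hτ => hg (by nlinarith [hτ.1])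
  norm_num at h
  exact h

lemma dyadicAvg_le (hg : Monotone g) (hr : 0 ≤ r) : dyadicAvg g r ≤ g (r * 2) := by
  have h : dyadicAvg g r ≤ ∫ _ in (1 : ℝ)..2, g (r * 2) :=
    intervalIntegral.integral_mono_on one_le_two
      (intervalIntegrable_comp_mul_left hg hr 1 2) intervalIntegrable_const
      fun τ hτ => hg (by nlinarith [hτ.2])
  norm_num at h
  exact h

lemma dyadicAvg_le_dyadicAvg {g₁ g₂ : ℝ → ℝ} (hg₁ : Monotone g₁) (hg₂ : Monotone g₂)
    (h : ∀ s, g₁ s ≤ g₂ s) (hr : 0 ≤ r) : dyadicAvg g₁ r ≤ dyadicAvg g₂ r :=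
  intervalIntegral.integral_mono_on one_le_two (intervalIntegrable_comp_mul_left hg₁ hr 1 2)
    (intervalIntegrable_comp_mul_left hg₂ hr 1 2) fun _ _ => h _

lemma monotoneOn_dyadicAvg (hg : Monotone g) : MonotoneOn (dyadicAvg g) (Ici 0) :=
  fun _ ha _ hb hab =>
    intervalIntegral.integral_mono_on one_le_two (intervalIntegrable_comp_mul_left hg ha 1 2)
      (intervalIntegrable_comp_mul_left hg hb 1 2)
      fun _ hτ => hg (mul_le_mul_of_nonneg_right hab (zero_le_one.trans hτ.1))

lemma continuousOn_dyadicAvg_Ioi (hg : Monotone g) : ContinuousOn (dyadicAvg g) (Ioi 0) := by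
  have hc : Continuous fun r => ∫ τ in (0 : ℝ)..r, g τ :=
    intervalIntegral.continuous_primitive (fun _ _ => hg.intervalIntegrable) 0
  have hinv : ContinuousOn (fun r : ℝ => r⁻¹) (Ioi 0) :=
    continuousOn_inv₀.mono fun r hr => (mem_Ioi.1 hr).ne'
  refine (hinv.mul ((hc.comp (continuous_mul_const 2)).sub hc).continuousOn).congr
    fun r hr => ?_
  rw [dyadicAvg, intervalIntegral.integral_comp_mul_left _ (mem_Ioi.1 hr).ne', mul_one]
  exact congrArg (r⁻¹ * ·) (intervalIntegral.integral_interval_sub_left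
    hg.intervalIntegrable hg.intervalIntegrable).symm

lemma continuousOn_dyadicAvg (hg : Monotone g) (hg0 : g 0 = 0)
    (hc : ContinuousWithinAt g (Ici 0) 0) :
    ContinuousOn (dyadicAvg g) (Ici 0) := by
  intro r hr
  rcases (mem_Ici.1 hr).eq_or_lt with rfl | hr
  · have h0 : dyadicAvg g 0 = g 0 := by simp [dyadicAvg, hg0]
    have h2 : Tendsto (fun r : ℝ => r * 2) (𝓝[≥] 0) (𝓝[≥] 0) := by
      simpa using (continuous_mul_const (2 : ℝ)).continuousWithinAt.tendsto_nhdsWithin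
        (s := Ici 0) (t := Ici 0) (x := 0) fun r (hr : 0 ≤ r) => mul_nonneg hr zero_le_two
    rw [ContinuousWithinAt, h0]
    refine tendsto_of_tendsto_of_tendsto_of_le_of_le' hc (Tendsto.comp hc h2) ?_ ?_
    · filter_upwards [self_mem_nhdsWithin] with r hr using le_dyadicAvg hg hr
    · filter_upwards [self_mem_nhdsWithin] with r hr using dyadicAvg_le hg hr
  · exact ((continuousOn_dyadicAvg_Ioi hg).continuousAt (Ioi_mem_nhds hr)).continuousWithinAt

lemma isClassK_dyadicAvg_add (hg : Monotone g) (hg0 : g 0 = 0)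
    (hc : ContinuousWithinAt g (Ici 0) 0) {c : ℝ} (hc' : 0 < c) :
    IsClassK fun r => dyadicAvg g r + c * r :=
  ⟨(continuousOn_dyadicAvg hg hg0 hc).add (continuous_const_mul c).continuousOn,
    fun _ ha _ hb hab => add_lt_add_of_le_of_lt (monotoneOn_dyadicAvg hg ha hb hab.le)
      (mul_lt_mul_of_pos_left hab hc'), by simp [dyadicAvg, hg0]⟩

lemma exists_isClassK_ge_of_monotone (hg : Monotone g) (hg0 : g 0 = 0)
    (hc : ContinuousWithinAt g (Ici 0) 0) : ∃ κ, IsClassK κ ∧ ∀ r, 0 ≤ r → g r ≤ κ r :=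
  ⟨_, isClassK_dyadicAvg_add hg hg0 hc one_pos, fun r hr => by
    linarith [le_dyadicAvg hg hr]⟩

end dyadicAvg

lemma exists_isClassKL_ge {ω : ℝ → ℝ → ℝ} (hmono : ∀ t, Monotone fun r => ω r t)
    (hanti : ∀ r, Antitone (ω r)) (hzero : ∀ t, ω 0 t = 0)
    (hcont : ∀ t, ContinuousWithinAt (fun r => ω r t) (Ici 0) 0)
    (hlim : ∀ r, Tendsto (ω r) atTop (𝓝 0)) :
    ∃ β, IsClassKL β ∧ ∀ r t, 0 ≤ r → ω r t ≤ β r t := by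
  have hle : ∀ r t, 0 ≤ r → ω r t ≤ dyadicAvg (fun s => ω s t) r :=
    fun r t hr => le_dyadicAvg (hmono t) hr
  refine ⟨fun r t => dyadicAvg (fun s => ω s t) r + Real.exp (-t) * r,
    ⟨fun t _ => isClassK_dyadicAvg_add (hmono t) (hzero t) (hcont t) (Real.exp_pos _),
      fun r (hr : 0 ≤ r) => ⟨fun t _ t' _ htt' => ?_, ?_⟩⟩, fun r t hr => ?_⟩
  · exact add_le_add
      (dyadicAvg_le_dyadicAvg (hmono t') (hmono t) (fun s => hanti s htt') hr)
      (mul_le_mul_of_nonneg_right (Real.exp_le_exp.2 (neg_le_neg htt')) hr)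
  · have h1 : Tendsto (fun t => dyadicAvg (fun s => ω s t) r) atTop (𝓝 0) :=
      tendsto_of_tendsto_of_tendsto_of_le_of_le tendsto_const_nhds (hlim (r * 2))
        (fun t => (hzero t).symm.le.trans ((hmono t hr).trans (hle r t hr)))
        fun t => dyadicAvg_le (hmono t) hr
    simpa using h1.add (Real.tendsto_exp_neg_atTop_nhds_zero.mul_const r)
  · exact le_add_of_le_of_nonneg (hle r t hr) (mul_nonneg (Real.exp_pos _).le hr)

/-- The least upper bound of those `a i` whose radius `r i` is at most `R` and whose time `t i` is
at least `T`. It is meant for `a ≥ 0`, where the junk value `sSup ∅ = 0` is the right one. -/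
def envelope {ι : Type*} (r t a : ι → ℝ) (R T : ℝ) : ℝ := sSup (a '' {i | r i ≤ R ∧ T ≤ t i})

section envelope

variable {ι : Type*} {r t a : ι → ℝ} {κ : ℝ → ℝ}

lemma envelope_nonneg (ha : ∀ i, 0 ≤ a i) (R T : ℝ) : 0 ≤ envelope r t a R T :=
  Real.sSup_nonneg (forall_mem_image.2 fun i _ => ha i)

lemma envelope_le {R T C : ℝ} (hC : 0 ≤ C) (h : ∀ i, r i ≤ R → T ≤ t i → a i ≤ C) :
    envelope r t a R T ≤ C :=
  Real.sSup_le (forall_mem_image.2 fun i hi => h i hi.1 hi.2) hC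

lemma le_envelope (hκ : IsClassK κ) (hr : ∀ i, 0 ≤ r i) (hA : ∀ i, a i ≤ κ (r i)) {R T : ℝ}
    {i : ι} (hR : r i ≤ R) (hT : T ≤ t i) : a i ≤ envelope r t a R T :=
  le_csSup ⟨κ R, forall_mem_image.2 fun j hj => (hA j).trans (hκ.mono (hr j) hj.1)⟩
    (mem_image_of_mem a ⟨hR, hT⟩)

lemma exists_isClassKL_bound (hκ : IsClassK κ) (hr : ∀ i, 0 ≤ r i) (ha : ∀ i, 0 ≤ a i)
    (hA : ∀ i, a i ≤ κ (r i))
    (hT : ∀ R, ∀ ε > 0, ∃ T, ∀ i, r i ≤ R → T ≤ t i → a i ≤ ε) :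
    ∃ β, IsClassKL β ∧ ∀ i, a i ≤ β (r i) (t i) := by
  have hle : ∀ {R T i}, r i ≤ R → T ≤ t i → a i ≤ envelope r t a R T := le_envelope hκ hr hA
  have hnn : ∀ R T, 0 ≤ envelope r t a R T := envelope_nonneg ha
  have hκle : ∀ R T, 0 ≤ R → envelope r t a R T ≤ κ R := fun R T hR =>
    envelope_le (hκ.nonneg hR) fun i hi _ => (hA i).trans (hκ.mono (hr i) hi)
  have hzero : ∀ T, envelope r t a 0 T = 0 := fun T =>
    le_antisymm ((hκle 0 T le_rfl).trans_eq hκ.2.2) (hnn 0 T)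
  have hcont : ∀ T, ContinuousWithinAt (fun R => envelope r t a R T) (Ici 0) 0 := by
    intro T
    rw [ContinuousWithinAt, hzero]
    refine tendsto_of_tendsto_of_tendsto_of_le_of_le' tendsto_const_nhds hκ.tendsto_zero
      (Eventually.of_forall fun R => hnn R T) ?_
    filter_upwards [self_mem_nhdsWithin] with R hR using hκle R T hR
  have hlim : ∀ R, Tendsto (envelope r t a R) atTop (𝓝 0) := by
    refine fun R => tendsto_order.2
      ⟨fun c hc => Eventually.of_forall fun T => hc.trans_le (hnn R T), fun c hc => ?_⟩
    obtain ⟨T, hT⟩ := hT R (c / 2) (half_pos hc)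
    filter_upwards [eventually_ge_atTop T] with T' hT'
    exact (envelope_le (half_pos hc).le fun i hi hi' => hT i hi (hT'.trans hi')).trans_lt
      (half_lt_self hc)
  obtain ⟨β, hβ, hωβ⟩ := exists_isClassKL_ge
    (fun T R R' hRR' => envelope_le (hnn R' T) fun i hi => hle (hi.trans hRR'))
    (fun R T T' hTT' => envelope_le (hnn R T) fun i hi hi' => hle hi (hTT'.trans hi'))
    hzero hcont hlim
  exact ⟨β, hβ, fun i => (hle le_rfl le_rfl).trans (hωβ _ _ (hr i))⟩

end envelope

lemma exists_isClassK_norm_bound {E F : Type*} [SeminormedAddCommGroup E] [ProperSpace E]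
    [SeminormedAddCommGroup F] {h : E → F} (hc : Continuous h) (h0 : h 0 = 0) :
    ∃ κ, IsClassK κ ∧ ∀ ξ, ‖h ξ‖ ≤ κ ‖ξ‖ := by
  let g : ℝ → ℝ := fun r => sSup ((‖h ·‖) '' Metric.closedBall 0 r)
  have hle : ∀ {r ξ}, ‖ξ‖ ≤ r → ‖h ξ‖ ≤ g r := fun hξ =>
    le_csSup ((isCompact_closedBall 0 _).image hc.norm).bddAbove
      (mem_image_of_mem _ (mem_closedBall_zero_iff.2 hξ))
  have hge : ∀ {r C}, 0 ≤ C → (∀ ξ, ‖ξ‖ ≤ r → ‖h ξ‖ ≤ C) → g r ≤ C := fun hC hb =>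
    Real.sSup_le (forall_mem_image.2 fun ξ hξ => hb ξ (mem_closedBall_zero_iff.1 hξ)) hC
  have hnn : ∀ r, 0 ≤ g r := fun r =>
    Real.sSup_nonneg (forall_mem_image.2 fun _ _ => norm_nonneg _)
  have hsmall : ∀ ε > 0, ∃ δ > 0, ∀ r < δ, g r ≤ ε := by
    intro ε hε
    obtain ⟨δ, hδ, hδε⟩ := Metric.continuous_iff.1 hc 0 ε hε
    refine ⟨δ, hδ, fun r hr => hge hε.le fun ξ hξ => ?_⟩
    simpa [h0] using (hδε ξ (by simpa using hξ.trans_lt hr)).le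
  have hg0 : g 0 = 0 := le_antisymm (le_of_forall_pos_le_add fun ε hε => by
    obtain ⟨δ, hδ, hδε⟩ := hsmall ε hε
    simpa using hδε 0 hδ) (hnn 0)
  have hcont : ContinuousWithinAt g (Ici 0) 0 := by
    refine Metric.continuousWithinAt_iff.2 fun ε hε => ?_
    obtain ⟨δ, hδ, hδε⟩ := hsmall (ε / 2) (half_pos hε)
    refine ⟨δ, hδ, fun r _ hrδ => ?_⟩
    rw [hg0, Real.dist_eq, sub_zero, abs_of_nonneg (hnn r)]
    exact (hδε r ((le_abs_self r).trans_lt (by simpa using hrδ))).trans_lt (half_lt_self hε)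
  obtain ⟨κ, hκ, hgκ⟩ := exists_isClassK_ge_of_monotone
    (fun r r' hrr' => hge (hnn r') fun ξ hξ => hle (hξ.trans hrr')) hg0 hcont
  exact ⟨κ, hκ, fun ξ => (hle le_rfl).trans (hgκ _ (norm_nonneg ξ))⟩

/-! ### Inputs -/

/-- The inputs for which the stability estimates are asserted: admissible and essentially bounded
on all of `[0,∞)`. -/
def IsEssBddInput {m : ℕ} (u : ℝ → EuclideanSpace ℝ (Fin m)) : Prop := IsInput u ∧ BddInput u

/-- The concatenation of `u` on `(-∞,τ]` with `v` started at time `τ`. -/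
def concatInput {F : Type*} (τ : ℝ) (u v : ℝ → F) : ℝ → F :=
  fun t => if t ≤ τ then u t else v (t - τ)

section inputs

variable {m : ℕ} {u v : ℝ → EuclideanSpace ℝ (Fin m)} {C : ℝ}

lemma uNorm_nonneg (u : ℝ → EuclideanSpace ℝ (Fin m)) : 0 ≤ uNorm u := ENNReal.toReal_nonneg

lemma BddInput.ae_norm_le (hu : BddInput u) :
    ∀ᵐ t ∂(volume.restrict (Ici (0 : ℝ))), ‖u t‖ ≤ uNorm u := by
  filter_upwards [ENNReal.ae_le_essSup (μ := volume.restrict (Ici (0 : ℝ)))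
    fun t => (‖u t‖₊ : ℝ≥0∞)] with t ht
  simpa [uNorm, uNormE] using ENNReal.toReal_mono hu ht

lemma uNormE_le_of_ae (h : ∀ᵐ t ∂(volume.restrict (Ici (0 : ℝ))), ‖u t‖ ≤ C) :
    uNormE u ≤ ENNReal.ofReal C := by
  refine essSup_le_of_ae_le _ ?_
  filter_upwards [h] with t ht
  rw [← ENNReal.ofReal_coe_nnreal]
  exact ENNReal.ofReal_le_ofReal ht

lemma uNorm_le_of_ae (hC : 0 ≤ C) (h : ∀ᵐ t ∂(volume.restrict (Ici (0 : ℝ))), ‖u t‖ ≤ C) :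
    uNorm u ≤ C :=
  ENNReal.toReal_le_of_le_ofReal hC (uNormE_le_of_ae h)

lemma isEssBddInput_of_ae (hu : Measurable u)
    (h : ∀ᵐ t ∂(volume.restrict (Ici (0 : ℝ))), ‖u t‖ ≤ C) : IsEssBddInput u :=
  ⟨⟨hu, fun _ _ => ⟨C, ae_restrict_of_ae_restrict_of_subset Icc_subset_Ici_self h⟩⟩,
    ne_top_of_le_ne_top ENNReal.ofReal_ne_top (uNormE_le_of_ae h)⟩

lemma IsEssBddInput.ae_norm_le (hu : IsEssBddInput u) (T : ℝ) :
    ∀ᵐ t ∂(volume.restrict (Icc 0 T)), ‖u t‖ ≤ uNorm u :=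
  ae_restrict_of_ae_restrict_of_subset Icc_subset_Ici_self hu.2.ae_norm_le

lemma isEssBddInput_const (μ : EuclideanSpace ℝ (Fin m)) : IsEssBddInput fun _ => μ :=
  isEssBddInput_of_ae measurable_const (Eventually.of_forall fun _ => le_rfl)

lemma uNorm_const_le (μ : EuclideanSpace ℝ (Fin m)) : uNorm (fun _ => μ) ≤ ‖μ‖ :=
  uNorm_le_of_ae (norm_nonneg μ) (Eventually.of_forall fun _ => le_rfl)

variable {τ : ℝ}

lemma ae_norm_concatInput_le (hu : BddInput u) (hv : BddInput v) :
    ∀ᵐ t ∂(volume.restrict (Ici (0 : ℝ))),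
      ‖concatInput τ u v t‖ ≤ max (uNorm u) (uNorm v) := by
  have hshift : ∀ᵐ t ∂(volume : Measure ℝ), t - τ ∈ Ici 0 → ‖v (t - τ)‖ ≤ uNorm v :=
    (measurePreserving_sub_right volume τ).quasiMeasurePreserving.ae
      ((ae_restrict_iff' measurableSet_Ici).1 hv.ae_norm_le)
  filter_upwards [hu.ae_norm_le, ae_restrict_of_ae hshift] with t hut hvt
  unfold concatInput
  split_ifs with ht
  · exact le_max_of_le_left hut
  · exact le_max_of_le_right (hvt (sub_nonneg.2 (not_le.1 ht).le))

lemma IsEssBddInput.concat (hu : IsEssBddInput u) (hv : IsEssBddInput v) :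
    IsEssBddInput (concatInput τ u v) :=
  isEssBddInput_of_ae (Measurable.ite measurableSet_Iic hu.1.1
    (hv.1.1.comp (measurable_id.sub_const τ))) (ae_norm_concatInput_le hu.2 hv.2)

lemma IsEssBddInput.uNorm_concat_le (hu : IsEssBddInput u) (hv : IsEssBddInput v) :
    uNorm (concatInput τ u v) ≤ max (uNorm u) (uNorm v) :=
  uNorm_le_of_ae (le_max_of_le_left (uNorm_nonneg u)) (ae_norm_concatInput_le hu.2 hv.2)

end inputs

/-! ### Carathéodory solutions -/

lemma exists_norm_le_of_continuous {E F G : Type*} [SeminormedAddCommGroup E] [ProperSpace E]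
    [SeminormedAddCommGroup F] [ProperSpace F] [SeminormedAddCommGroup G] {f : E → F → G}
    (hf : Continuous (Function.uncurry f)) (R U : ℝ) :
    ∃ C, 0 ≤ C ∧ ∀ ξ μ, ‖ξ‖ ≤ R → ‖μ‖ ≤ U → ‖f ξ μ‖ ≤ C := by
  obtain ⟨C, hC⟩ := (((isCompact_closedBall (0 : E) R).prod
    (isCompact_closedBall (0 : F) U)).image hf).isBounded.exists_norm_le
  refine ⟨max C 0, le_max_right _ _, fun ξ μ hξ hμ => le_max_of_le_left (hC _ ⟨(ξ, μ), ?_, rfl⟩)⟩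
  simpa using ⟨hξ, hμ⟩

lemma exists_norm_sub_le_of_locallyLipschitz {E F G : Type*} [SeminormedAddCommGroup E]
    [ProperSpace E] [SeminormedAddCommGroup F] [ProperSpace F] [SeminormedAddCommGroup G]
    {f : E → F → G} (hf : LocallyLipschitz (Function.uncurry f)) (R U : ℝ) :
    ∃ L, 0 ≤ L ∧ ∀ ξ ξ' μ, ‖ξ‖ ≤ R → ‖ξ'‖ ≤ R → ‖μ‖ ≤ U → ‖f ξ μ - f ξ' μ‖ ≤ L * ‖ξ - ξ'‖ := by
  obtain ⟨K, hK⟩ := LocallyLipschitzOn.exists_lipschitzOnWith_of_compact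
    ((isCompact_closedBall (0 : E) R).prod (isCompact_closedBall (0 : F) U))
    hf.locallyLipschitzOn
  refine ⟨K, K.2, fun ξ ξ' μ hξ hξ' hμ => ?_⟩
  have h := hK.dist_le_mul (ξ, μ) (by simpa using ⟨hξ, hμ⟩) (ξ', μ) (by simpa using ⟨hξ', hμ⟩)
  simpa [dist_eq_norm, Prod.norm_def] using h

lemma le_mul_exp_of_le_add_mul_integral {g : ℝ → ℝ} {a L T : ℝ} (hL : 0 ≤ L)
    (hg : ContinuousOn g (Icc 0 T)) (h : ∀ t ∈ Icc 0 T, g t ≤ a + L * ∫ s in (0 : ℝ)..t, g s) :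
    ∀ t ∈ Icc 0 T, g t ≤ a * Real.exp (L * t) := by
  intro t ht
  have hI : uIcc 0 T = Icc 0 T := uIcc_of_le (ht.1.trans ht.2)
  have hi : IntervalIntegrable g volume 0 T := (hI.symm ▸ hg).intervalIntegrable
  have hcont : ContinuousOn (fun t => a + L * ∫ s in (0 : ℝ)..t, g s) (Icc 0 T) :=
    continuousOn_const.add (continuousOn_const.mul
      (hI ▸ intervalIntegral.continuousOn_primitive_interval' hi left_mem_uIcc))
  have hderiv : ∀ s ∈ Ico 0 T,
      HasDerivWithinAt (fun t => a + L * ∫ s in (0 : ℝ)..t, g s) (L * g s) (Ici s) s := by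
    intro s hs
    have hnhds : Icc 0 T ∈ 𝓝[>] s :=
      mem_of_superset (Ioo_mem_nhdsGT hs.2) fun y hy => ⟨hs.1.trans hy.1.le, hy.2.le⟩
    exact ((intervalIntegral.integral_hasDerivWithinAt_right (t := Ioi s)
      (hi.mono_set (uIcc_subset_uIcc left_mem_uIcc (hI ▸ ⟨hs.1, hs.2.le⟩)))
      ⟨Icc 0 T, hnhds, hg.aestronglyMeasurable measurableSet_Icc⟩
      ((hg s ⟨hs.1, hs.2.le⟩).mono_of_mem_nhdsWithin hnhds)).const_mul L).const_add a
  have hgron := le_gronwallBound_of_liminf_deriv_right_le (δ := a) (K := L) (ε := 0) hcont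
    (fun s hs r hr => ((hderiv s hs).liminf_right_slope_le hr).mono fun z hz => by
      simpa [slope_def_field, div_eq_inv_mul] using hz)
    (by simp) (fun s hs => by
      simpa using mul_le_mul_of_nonneg_left (h s ⟨hs.1, hs.2.le⟩) hL) t ht
  rw [gronwallBound_ε0, sub_zero] at hgron
  exact (h t ht).trans hgron

/-- `z` is a Carathéodory solution on `[0,T]` of `ż = f(z,u)` with initial state `ξ`.
Integrability of the right-hand side is included, since the integral of a non-integrable function
has the junk value `0`. -/
def IsSolutionOn {E F : Type*} [NormedAddCommGroup E] [NormedSpace ℝ E]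
    (f : E → F → E) (u : ℝ → F) (ξ : E) (z : ℝ → E) (T : ℝ) : Prop :=
  IntegrableOn (fun s => f (z s) (u s)) (Icc 0 T) ∧
    ∀ t ∈ Icc 0 T, z t = ξ + ∫ s in (0 : ℝ)..t, f (z s) (u s)

namespace IsSolutionOn

variable {E F : Type*} [NormedAddCommGroup E] [NormedSpace ℝ E]
  {f : E → F → E} {u v : ℝ → F} {ξ ξ' : E} {z z' : ℝ → E} {T : ℝ}

lemma intervalIntegrable (hz : IsSolutionOn f u ξ z T) {a b : ℝ} (ha : a ∈ Icc 0 T)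
    (hb : b ∈ Icc 0 T) : IntervalIntegrable (fun s => f (z s) (u s)) volume a b :=
  (hz.1.mono_set (ordConnected_Icc.uIcc_subset ha hb)).intervalIntegrable

lemma sub_eq_integral (hz : IsSolutionOn f u ξ z T) {a b : ℝ} (ha : a ∈ Icc 0 T)
    (hb : b ∈ Icc 0 T) : z b - z a = ∫ s in a..b, f (z s) (u s) := by
  have h0 : (0 : ℝ) ∈ Icc 0 T := ⟨le_rfl, ha.1.trans ha.2⟩
  rw [hz.2 a ha, hz.2 b hb, add_sub_add_left_eq_sub, intervalIntegral.integral_interval_sub_left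
    (hz.intervalIntegrable h0 hb) (hz.intervalIntegrable h0 ha)]

lemma continuousOn (hz : IsSolutionOn f u ξ z T) : ContinuousOn z (Icc 0 T) := by
  rcases lt_or_ge T 0 with hT | hT
  · simp [Icc_eq_empty hT.not_ge]
  · have h := intervalIntegral.continuousOn_primitive_interval' (hz.intervalIntegrable
      (left_mem_Icc.2 hT) (right_mem_Icc.2 hT)) left_mem_uIcc
    rw [uIcc_of_le hT] at h
    exact (continuousOn_const.add h).congr hz.2

lemma congr_input (hz : IsSolutionOn f u ξ z T) (huv : ∀ s ∈ Ioc 0 T, u s = v s) :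
    IsSolutionOn f v ξ z T := by
  have hfg : ∀ s ∈ Ioc 0 T, f (z s) (u s) = f (z s) (v s) := fun s hs => by rw [huv s hs]
  refine ⟨?_, fun t ht => (hz.2 t ht).trans ?_⟩
  · rw [integrableOn_Icc_iff_integrableOn_Ioc]
    exact (hz.1.mono_set Ioc_subset_Icc_self).congr_fun hfg measurableSet_Ioc
  · congr 1
    refine intervalIntegral.integral_congr_ae (Eventually.of_forall fun s hs => hfg s ?_)
    rw [uIoc_of_le ht.1] at hs
    exact ⟨hs.1, hs.2.trans ht.2⟩

lemma comp_add {τ : ℝ} (hτ : 0 ≤ τ) (hz : IsSolutionOn f u ξ z (τ + T)) :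
    IsSolutionOn f (fun s => u (τ + s)) (z τ) (fun s => z (τ + s)) T := by
  have hmem : ∀ t ∈ Icc 0 T, τ + t ∈ Icc 0 (τ + T) := fun t ht =>
    ⟨add_nonneg hτ ht.1, add_le_add_right ht.2 τ⟩
  refine ⟨?_, fun t ht => ?_⟩
  · rcases lt_or_ge T 0 with hT | hT
    · simp [Icc_eq_empty hT.not_ge]
    · have h := (hz.intervalIntegrable (hmem 0 ⟨le_rfl, hT⟩)
        (hmem T ⟨hT, le_rfl⟩)).comp_add_left τ
      simp only [add_zero, sub_self, add_sub_cancel_left] at h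
      exact (intervalIntegrable_iff_integrableOn_Icc_of_le hT).1 h
  · have h0 : τ ∈ Icc 0 (τ + T) := ⟨hτ, le_add_of_nonneg_right (ht.1.trans ht.2)⟩
    rw [intervalIntegral.integral_comp_add_left (fun s => f (z s) (u s)), add_zero,
      ← hz.sub_eq_integral h0 (hmem t ht), add_sub_cancel]

lemma norm_sub_le {L : ℝ} (hL : 0 ≤ L) (hz : IsSolutionOn f u ξ z T)
    (hz' : IsSolutionOn f u ξ' z' T)
    (hLip : ∀ᵐ s ∂(volume.restrict (Icc 0 T)),
      ‖f (z s) (u s) - f (z' s) (u s)‖ ≤ L * ‖z s - z' s‖) :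
    ∀ t ∈ Icc 0 T, ‖z t - z' t‖ ≤ ‖ξ - ξ'‖ * Real.exp (L * t) := by
  have hcont : ContinuousOn (fun t => ‖z t - z' t‖) (Icc 0 T) :=
    (hz.continuousOn.sub hz'.continuousOn).norm
  refine le_mul_exp_of_le_add_mul_integral hL hcont fun t ht => ?_
  have h0 : (0 : ℝ) ∈ Icc 0 T := ⟨le_rfl, ht.1.trans ht.2⟩
  have hsub : z t - z' t =
      (ξ - ξ') + ∫ s in (0 : ℝ)..t, (f (z s) (u s) - f (z' s) (u s)) := by
    rw [hz.2 t ht, hz'.2 t ht, intervalIntegral.integral_sub (hz.intervalIntegrable h0 ht)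
      (hz'.intervalIntegrable h0 ht)]
    abel
  rw [hsub, ← intervalIntegral.integral_const_mul]
  refine (norm_add_le _ _).trans (add_le_add le_rfl
    (intervalIntegral.norm_integral_le_of_norm_le ht.1 ?_ ?_))
  · filter_upwards [(ae_restrict_iff' measurableSet_Icc).1 hLip] with s hs hst
    exact hs ⟨hst.1.le, hst.2.trans ht.2⟩
  · refine (continuousOn_const.mul (hcont.mono ?_)).intervalIntegrable
    exact ordConnected_Icc.uIcc_subset h0 ht

lemma eqOn [ProperSpace E] [NormedAddCommGroup F] [ProperSpace F] {U : ℝ}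
    (hf : LocallyLipschitz (Function.uncurry f))
    (hu : ∀ᵐ s ∂(volume.restrict (Icc 0 T)), ‖u s‖ ≤ U) (hz : IsSolutionOn f u ξ z T)
    (hz' : IsSolutionOn f u ξ z' T) : EqOn z z' (Icc 0 T) := by
  obtain ⟨R, hR⟩ := (isCompact_Icc.image_of_continuousOn hz.continuousOn).isBounded.exists_norm_le
  obtain ⟨R', hR'⟩ :=
    (isCompact_Icc.image_of_continuousOn hz'.continuousOn).isBounded.exists_norm_le
  obtain ⟨L, hL, hLip⟩ := exists_norm_sub_le_of_locallyLipschitz hf (max R R') U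
  intro t ht
  have h := norm_sub_le hL hz hz' (by
    filter_upwards [hu, ae_restrict_mem measurableSet_Icc] with s hus hs
    exact hLip _ _ _ (le_max_of_le_left (hR _ (mem_image_of_mem z hs)))
      (le_max_of_le_right (hR' _ (mem_image_of_mem z' hs))) hus) t ht
  rw [sub_self, norm_zero, zero_mul] at h
  exact sub_eq_zero.1 (norm_le_zero_iff.1 h)

lemma norm_sub_le_mul_sub {C a b : ℝ} (hz : IsSolutionOn f u ξ z T)
    (hC : ∀ᵐ s ∂(volume.restrict (Icc 0 T)), ‖f (z s) (u s)‖ ≤ C) (ha : 0 ≤ a) (hab : a ≤ b)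
    (hb : b ≤ T) : ‖z b - z a‖ ≤ C * (b - a) := by
  rw [hz.sub_eq_integral ⟨ha, hab.trans hb⟩ ⟨ha.trans hab, hb⟩]
  refine (intervalIntegral.norm_integral_le_of_norm_le_const_ae ?_).trans_eq
    (by rw [abs_of_nonneg (sub_nonneg.2 hab)])
  filter_upwards [(ae_restrict_iff' measurableSet_Icc).1 hC] with s hs hsab
  rw [uIoc_of_le hab] at hsab
  exact hs ⟨ha.trans hsab.1.le, hsab.2.trans hb⟩

lemma norm_sub_euler_le [CompleteSpace E] {L C : ℝ} {μ : F} (hL : 0 ≤ L) (hC : 0 ≤ C) (hT : 0 ≤ T)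
    (hz : IsSolutionOn f (fun _ => μ) ξ z T) (hbound : ∀ s ∈ Icc 0 T, ‖f (z s) μ‖ ≤ C)
    (hLip : ∀ s ∈ Icc 0 T, ‖f (z s) μ - f ξ μ‖ ≤ L * ‖z s - ξ‖) :
    ‖z T - (ξ + T • f ξ μ)‖ ≤ L * C * T ^ 2 := by
  have h0 : (0 : ℝ) ∈ Icc 0 T := left_mem_Icc.2 hT
  have hTT : T ∈ Icc 0 T := right_mem_Icc.2 hT
  have hz0 : z 0 = ξ := by simpa using hz.2 0 h0
  have hstep : ∀ s ∈ Icc 0 T, ‖z s - ξ‖ ≤ C * T := by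
    intro s hs
    rw [← hz0]
    refine (hz.norm_sub_le_mul_sub ?_ le_rfl hs.1 hs.2).trans
      (mul_le_mul_of_nonneg_left (by simpa using hs.2) hC)
    filter_upwards [ae_restrict_mem measurableSet_Icc] with r hr using hbound r hr
  have herr : z T - (ξ + T • f ξ μ) = ∫ s in (0 : ℝ)..T, (f (z s) μ - f ξ μ) := by
    rw [intervalIntegral.integral_sub (hz.intervalIntegrable h0 hTT) intervalIntegrable_const,
      ← hz.sub_eq_integral h0 hTT, hz0]
    simp [sub_sub]
  rw [herr]
  calc ‖∫ s in (0 : ℝ)..T, (f (z s) μ - f ξ μ)‖ ≤ L * (C * T) * |T - 0| := by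
        refine intervalIntegral.norm_integral_le_of_norm_le_const fun s hs => ?_
        rw [uIoc_of_le hT] at hs
        have hs' : s ∈ Icc 0 T := ⟨hs.1.le, hs.2⟩
        exact (hLip s hs').trans (mul_le_mul_of_nonneg_left (hstep s hs') hL)
    _ = L * C * T ^ 2 := by rw [sub_zero, abs_of_nonneg hT]; ring

lemma lipschitzOnWith {C : ℝ≥0} (hz : IsSolutionOn f u ξ z T)
    (hC : ∀ᵐ s ∂(volume.restrict (Icc 0 T)), ‖f (z s) (u s)‖ ≤ C) :
    LipschitzOnWith C z (Icc 0 T) := by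
  have hle : ∀ a ∈ Icc 0 T, ∀ b ∈ Icc 0 T, a ≤ b → dist (z a) (z b) ≤ C * dist a b := by
    intro a ha b hb hab
    rw [dist_comm (z a), dist_eq_norm, dist_comm a, Real.dist_eq, abs_of_nonneg (sub_nonneg.2 hab)]
    exact hz.norm_sub_le_mul_sub hC ha.1 hab hb.2
  refine LipschitzOnWith.of_dist_le_mul fun a ha b hb => ?_
  rcases le_total a b with hab | hba
  · exact hle a ha b hb hab
  · rw [dist_comm (z a), dist_comm a]
    exact hle b hb a ha hba

lemma ae_hasDerivAt [CompleteSpace E] (hz : IsSolutionOn f u ξ z T) :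
    ∀ᵐ s ∂(volume.restrict (Icc 0 T)), HasDerivAt z (f (z s) (u s)) s := by
  rcases lt_or_ge T 0 with hT | hT
  · simp [Icc_eq_empty hT.not_ge]
  have hintegrable := hz.intervalIntegrable (left_mem_Icc.2 hT) (right_mem_Icc.2 hT)
  rw [Measure.restrict_congr_set Ioo_ae_eq_Icc.symm, ae_restrict_iff' measurableSet_Ioo]
  filter_upwards [hintegrable.ae_hasDerivAt_integral] with s hs hsT
  rw [uIcc_of_le hT] at hs
  refine ((hs (Ioo_subset_Icc_self hsT) 0 (left_mem_Icc.2 hT)).const_add ξ).congr_of_eventuallyEq ?_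
  filter_upwards [Ioo_mem_nhds hsT.1 hsT.2] with t ht using hz.2 t (Ioo_subset_Icc_self ht)

lemma comp_le_sub_mul [CompleteSpace E] {V : E → ℝ} {a b c : ℝ} {C : ℝ≥0} (hV : ContDiff ℝ 1 V)
    (hz : IsSolutionOn f u ξ z T)
    (hC : ∀ᵐ s ∂(volume.restrict (Icc 0 T)), ‖f (z s) (u s)‖ ≤ C) (ha : 0 ≤ a) (hab : a ≤ b)
    (hb : b ≤ T)
    (hd : ∀ᵐ s ∂(volume.restrict (Icc a b)), fderiv ℝ V (z s) (f (z s) (u s)) ≤ -c) :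
    V (z b) ≤ V (z a) - c * (b - a) := by
  have hsub : Icc a b ⊆ Icc 0 T := Icc_subset_Icc ha hb
  have hac : AbsolutelyContinuousOnInterval (fun s => V (z s)) a b := by
    obtain ⟨K, hK⟩ := LocallyLipschitzOn.exists_lipschitzOnWith_of_compact
      (isCompact_Icc.image_of_continuousOn (hz.continuousOn.mono hsub))
      hV.locallyLipschitz.locallyLipschitzOn
    refine LipschitzOnWith.absolutelyContinuousOnInterval (K := K * C) ?_
    rw [uIcc_of_le hab]
    exact hK.comp ((hz.lipschitzOnWith hC).mono hsub) (mapsTo_image z _)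
  have hderiv : ∀ᵐ s ∂(volume.restrict (Icc a b)), deriv (fun s => V (z s)) s ≤ -c := by
    filter_upwards [hd, ae_restrict_of_ae_restrict_of_subset hsub hz.ae_hasDerivAt] with s hs hzs
    have hVz := (hV.differentiable one_ne_zero (z s)).hasFDerivAt.comp_hasDerivAt s hzs
    exact hVz.deriv.trans_le hs
  have hle := intervalIntegral.integral_mono_ae_restrict hab hac.intervalIntegrable_deriv
    (intervalIntegrable_const (c := -c)) hderiv
  rw [hac.integral_deriv_eq_sub, intervalIntegral.integral_const, smul_eq_mul] at hle
  linarith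

end IsSolutionOn

/-! ### Trajectories of a BIBS system -/

lemma aestronglyMeasurable_primitive {E : Type*} [NormedAddCommGroup E] [NormedSpace ℝ E]
    (F : ℝ → E) (a : ℝ) :
    AEStronglyMeasurable (fun t => ∫ s in a..t, F s) (volume.restrict (Ici a)) := by
  set S := {t | a ≤ t ∧ IntervalIntegrable F volume a t}
  have hS : S.OrdConnected := ⟨fun b hb c hc t ht => ⟨hb.1.trans ht.1,
    hc.2.mono_set (uIcc_subset_uIcc left_mem_uIcc (mem_uIcc_of_le (hb.1.trans ht.1) ht.2))⟩⟩
  have hcont : ContinuousOn (fun t => ∫ s in a..t, F s) S := by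
    intro t ht
    obtain ⟨b, hb, htb, hnhds⟩ : ∃ b ∈ S, t ≤ b ∧ Icc a b ∈ 𝓝[S] t := by
      by_cases hmax : ∃ b ∈ S, t < b
      · obtain ⟨b, hb, htb⟩ := hmax
        refine ⟨b, hb, htb.le, ?_⟩
        filter_upwards [self_mem_nhdsWithin, mem_nhdsWithin_of_mem_nhds (Iio_mem_nhds htb)]
          with s hs hsb using ⟨hs.1, hsb.le⟩
      · push Not at hmax
        exact ⟨t, ht, le_rfl, mem_of_superset self_mem_nhdsWithin fun s hs => ⟨hs.1, hmax s hs⟩⟩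
    have h := intervalIntegral.continuousOn_primitive_interval' hb.2 left_mem_uIcc
    rw [uIcc_of_le hb.1] at h
    exact (h t ⟨ht.1, htb⟩).mono_of_mem_nhdsWithin hnhds
  refine ((aestronglyMeasurable_indicator_iff hS.measurableSet).2
    (hcont.aestronglyMeasurable hS.measurableSet)).mono_measure Measure.restrict_le_self |>.congr ?_
  filter_upwards [ae_restrict_mem measurableSet_Ici] with t ht
  by_cases htS : t ∈ S
  · exact indicator_of_mem htS _
  · rw [indicator_of_notMem htS, intervalIntegral.integral_undef fun hF => htS ⟨ht, hF⟩]

section trajectories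

variable {n m : ℕ}
  {f : EuclideanSpace ℝ (Fin n) → EuclideanSpace ℝ (Fin m) → EuclideanSpace ℝ (Fin n)}
  {x : ℝ → EuclideanSpace ℝ (Fin n) → (ℝ → EuclideanSpace ℝ (Fin m)) → EuclideanSpace ℝ (Fin n)}
  {u v : ℝ → EuclideanSpace ℝ (Fin m)}

lemma IsSolutionMap.zero (hx : IsSolutionMap f x) (hu : IsInput u) (ξ : EuclideanSpace ℝ (Fin n)) :
    x 0 ξ u = ξ := by
  simpa using hx ξ u hu 0 self_mem_Ici

namespace IsBIBS

lemma exists_bound (hB : IsBIBS f x) (R U : ℝ) :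
    ∃ R', R ≤ R' ∧ ∀ ξ u, IsEssBddInput u → ‖ξ‖ ≤ R → uNorm u ≤ U →
      ∀ t, 0 ≤ t → ‖x t ξ u‖ ≤ R' := by
  obtain ⟨-, σ, hσ, h⟩ := hB
  refine ⟨max R (max (σ |R|) (σ |U|)), le_max_left _ _, fun ξ u hu hξ hU t ht => ?_⟩
  exact (h ξ u hu.1 hu.2 t ht).trans <| le_max_of_le_right <| max_le_max
    (hσ.mono (norm_nonneg _) (hξ.trans (le_abs_self R)))
    (hσ.mono (uNorm_nonneg _) (hU.trans (le_abs_self U)))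

/- The solution map alone only satisfies the integral equation, which a blown-up trajectory also
does since the integral is then junk. The BIBS bound rules this out: once the trajectory is known
to be measurable, the right-hand side is bounded, hence integrable. -/
lemma isSolutionOn (hB : IsBIBS f x) (hf : LocallyLipschitz (Function.uncurry f))
    (hu : IsEssBddInput u) (ξ : EuclideanSpace ℝ (Fin n)) (T : ℝ) :
    IsSolutionOn f u ξ (fun t => x t ξ u) T := by
  have hsub : Icc 0 T ⊆ Ici (0 : ℝ) := Icc_subset_Ici_self
  refine ⟨?_, fun t ht => hB.1 ξ u hu.1 t ht.1⟩
  obtain ⟨R, -, hR⟩ := hB.exists_bound ‖ξ‖ (uNorm u)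
  obtain ⟨C, -, hC⟩ := exists_norm_le_of_continuous hf.continuous R (uNorm u)
  have hmeas : AEStronglyMeasurable (fun t => x t ξ u) (volume.restrict (Ici 0)) := by
    refine ((aestronglyMeasurable_primitive
      (fun s => f (x s ξ u) (u s)) 0).const_add ξ).congr ?_
    filter_upwards [ae_restrict_mem measurableSet_Ici] with t ht using (hB.1 ξ u hu.1 t ht).symm
  refine Integrable.of_bound ((hf.continuous.comp_aestronglyMeasurable
    (hmeas.prodMk hu.1.1.aestronglyMeasurable)).mono_measure
      (Measure.restrict_mono hsub le_rfl)) C ?_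
  filter_upwards [hu.ae_norm_le T, ae_restrict_mem measurableSet_Icc] with t hut ht
  exact hC _ _ (hR ξ u hu le_rfl le_rfl t ht.1) hut

lemma continuousOn (hB : IsBIBS f x) (hf : LocallyLipschitz (Function.uncurry f))
    (hu : IsEssBddInput u) (ξ : EuclideanSpace ℝ (Fin n)) :
    ContinuousOn (fun t => x t ξ u) (Ici 0) := by
  intro t ht
  refine ((hB.isSolutionOn hf hu ξ (t + 1)).continuousOn t
    ⟨ht, le_add_of_nonneg_right zero_le_one⟩).mono_of_mem_nhdsWithin ?_
  filter_upwards [self_mem_nhdsWithin, mem_nhdsWithin_of_mem_nhds (Iio_mem_nhds (lt_add_one t))]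
    with s hs hst using ⟨hs, hst.le⟩

lemma exists_lipschitz_flow (hB : IsBIBS f x) (hf : LocallyLipschitz (Function.uncurry f))
    (R U T : ℝ) :
    ∃ C, 0 ≤ C ∧ ∀ ξ ξ' u, IsEssBddInput u → ‖ξ‖ ≤ R → ‖ξ'‖ ≤ R → uNorm u ≤ U →
      ∀ t ∈ Icc 0 T, ‖x t ξ u - x t ξ' u‖ ≤ C * ‖ξ - ξ'‖ := by
  obtain ⟨R', -, hR'⟩ := hB.exists_bound R U
  obtain ⟨L, hL, hLip⟩ := exists_norm_sub_le_of_locallyLipschitz hf R' U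
  refine ⟨Real.exp (L * T), (Real.exp_pos _).le, fun ξ ξ' u hu hξ hξ' hU t ht => ?_⟩
  have h := (hB.isSolutionOn hf hu ξ T).norm_sub_le hL (hB.isSolutionOn hf hu ξ' T) (by
    filter_upwards [hu.ae_norm_le T, ae_restrict_mem measurableSet_Icc] with s hus hs
    exact hLip _ _ _ (hR' ξ u hu hξ hU s hs.1) (hR' ξ' u hu hξ' hU s hs.1) (hus.trans hU)) t ht
  refine h.trans ?_
  rw [mul_comm]
  gcongr
  exact ht.2

lemma flow_concat (hB : IsBIBS f x) (hf : LocallyLipschitz (Function.uncurry f))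
    (hu : IsEssBddInput u) (hv : IsEssBddInput v) (ξ : EuclideanSpace ℝ (Fin n)) {τ s : ℝ}
    (hτ : 0 ≤ τ) (hs : 0 ≤ s) :
    x (τ + s) ξ (concatInput τ u v) = x s (x τ ξ u) v := by
  have hw : IsEssBddInput (concatInput τ u v) := hu.concat hv
  have hstart : x τ ξ (concatInput τ u v) = x τ ξ u :=
    (hB.isSolutionOn hf hw ξ τ).congr_input (v := u)
      (fun r hr => by simp [concatInput, hr.2]) |>.eqOn hf (hu.ae_norm_le τ)
      (hB.isSolutionOn hf hu ξ τ) (right_mem_Icc.2 hτ)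
  have hrest := ((hB.isSolutionOn hf hw ξ (τ + s)).comp_add hτ).congr_input (v := v)
    fun r hr => by simp [concatInput, hr.1.not_ge]
  rw [hstart] at hrest
  exact hrest.eqOn hf (hv.ae_norm_le s) (hB.isSolutionOn hf hv _ s) (right_mem_Icc.2 hs)

lemma exists_euler_bound (hB : IsBIBS f x) (hf : LocallyLipschitz (Function.uncurry f))
    (R U : ℝ) :
    ∃ C, 0 ≤ C ∧ ∀ ξ μ, ‖ξ‖ ≤ R → ‖μ‖ ≤ U → ∀ t, 0 ≤ t →
      ‖x t ξ (fun _ => μ) - (ξ + t • f ξ μ)‖ ≤ C * t ^ 2 := by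
  obtain ⟨R', hRR', hR'⟩ := hB.exists_bound R U
  obtain ⟨L, hL, hLip⟩ := exists_norm_sub_le_of_locallyLipschitz hf R' U
  obtain ⟨C, hC, hbound⟩ := exists_norm_le_of_continuous hf.continuous R' U
  refine ⟨L * C, mul_nonneg hL hC, fun ξ μ hξ hμ t ht => ?_⟩
  have hx : ∀ s ∈ Icc 0 t, ‖x s ξ (fun _ => μ)‖ ≤ R' := fun s hs =>
    hR' ξ _ (isEssBddInput_const μ) hξ ((uNorm_const_le μ).trans hμ) s hs.1
  exact (hB.isSolutionOn hf (isEssBddInput_const μ) ξ t).norm_sub_euler_le hL hC ht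
    (fun s hs => hbound _ _ (hx s hs) hμ)
    (fun s hs => hLip _ _ _ (hx s hs) (hξ.trans hRR') hμ)

end IsBIBS

end trajectories

/-! ### A Lyapunov function implies output stability -/

lemma le_of_nonincreasing_above {v : ℝ → ℝ} {t₀ t M : ℝ} (ht : t₀ ≤ t)
    (hv : ContinuousOn v (Icc t₀ t)) (h₀ : v t₀ ≤ M)
    (hd : ∀ a ∈ Icc t₀ t, (∀ s ∈ Icc a t, M < v s) → v t ≤ v a) : v t ≤ M := by
  by_contra! hlt
  have hcl : IsClosed (Icc t₀ t ∩ v ⁻¹' Iic M) :=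
    hv.preimage_isClosed_of_isClosed isClosed_Icc isClosed_Iic
  obtain ⟨a, ⟨ha, haM : v a ≤ M⟩, hmax⟩ := (isCompact_Icc.of_isClosed_subset hcl
    inter_subset_left).exists_isGreatest ⟨t₀, left_mem_Icc.2 ht, h₀⟩
  have hat : a < t := lt_of_le_of_ne ha.2 fun he => (he ▸ haM).not_gt hlt
  have habove : ∀ s ∈ Ioc a t, M < v s := fun s hs => by
    by_contra! hsM
    exact (hmax ⟨⟨ha.1.trans hs.1.le, hs.2⟩, hsM⟩).not_gt hs.1
  have htend : Tendsto v (𝓝[>] a) (𝓝 (v a)) := by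
    have h := (hv a ha).mono_left (nhdsWithin_mono a (Ioc_subset_Icc_self.trans
      (Icc_subset_Icc_left ha.1)))
    rwa [nhdsWithin_Ioc_eq_nhdsGT hat] at h
  have hle : v t ≤ v a := by
    refine ge_of_tendsto htend ?_
    filter_upwards [Ioc_mem_nhdsGT hat] with s hs
    exact hd s ⟨ha.1.trans hs.1.le, hs.2⟩ fun r hr => habove r ⟨hs.1.trans_le hr.1, hr.2⟩
  exact (hle.trans haM).not_gt hlt

/-- The dynamic part of the notion of an OLIOS-Lyapunov function: `V` decreases along `ẋ = f(x,u)`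
at the rate `α(V(x),|x|)` wherever it dominates the gain `χ(|u|)`. -/
structure IsDissipative {E F : Type*} [NormedAddCommGroup E] [NormedSpace ℝ E] [Norm F]
    (f : E → F → E) (V : E → ℝ) (χ : ℝ → ℝ) (α : ℝ → ℝ → ℝ) : Prop where
  contDiff : ContDiff ℝ 1 V
  nonneg : ∀ ξ, 0 ≤ V ξ
  gain : IsClassK χ
  rate : ∀ r ∈ Ici (0 : ℝ), IsClassK fun s => α s r
  antitoneOn_rate : ∀ s ∈ Ici (0 : ℝ), AntitoneOn (fun r => α s r) (Ici 0)
  fderiv_le : ∀ ξ μ, χ ‖μ‖ ≤ V ξ → fderiv ℝ V ξ (f ξ μ) ≤ -α (V ξ) ‖ξ‖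

namespace IsDissipative

variable {n m : ℕ}
  {f : EuclideanSpace ℝ (Fin n) → EuclideanSpace ℝ (Fin m) → EuclideanSpace ℝ (Fin n)}
  {x : ℝ → EuclideanSpace ℝ (Fin n) → (ℝ → EuclideanSpace ℝ (Fin m)) → EuclideanSpace ℝ (Fin n)}
  {V : EuclideanSpace ℝ (Fin n) → ℝ} {χ : ℝ → ℝ} {α : ℝ → ℝ → ℝ}
  {u : ℝ → EuclideanSpace ℝ (Fin m)} {ξ : EuclideanSpace ℝ (Fin n)}

lemma le_sub_mul (hV : IsDissipative f V χ α) (hB : IsBIBS f x)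
    (hf : LocallyLipschitz (Function.uncurry f)) (hu : IsEssBddInput u) {ε R a b : ℝ} (hε : 0 ≤ ε)
    (hR : ∀ t, 0 ≤ t → ‖x t ξ u‖ ≤ R) (ha : 0 ≤ a) (hab : a ≤ b)
    (hs : ∀ s ∈ Icc a b, max ε (χ (uNorm u)) ≤ V (x s ξ u)) :
    V (x b ξ u) ≤ V (x a ξ u) - α ε R * (b - a) := by
  obtain ⟨C, hC0, hC⟩ := exists_norm_le_of_continuous hf.continuous R (uNorm u)
  lift C to ℝ≥0 using hC0
  refine (hB.isSolutionOn hf hu ξ b).comp_le_sub_mul (C := C) hV.contDiff ?_ ha hab le_rfl ?_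
  · filter_upwards [hu.ae_norm_le b, ae_restrict_mem measurableSet_Icc] with s hus hsb
    exact hC _ _ (hR s hsb.1) hus
  · filter_upwards [ae_restrict_of_ae_restrict_of_subset (Icc_subset_Icc_left ha)
      (hu.ae_norm_le b), ae_restrict_mem measurableSet_Icc] with s hus hsab
    have hR0 : 0 ≤ R := (norm_nonneg _).trans (hR 0 le_rfl)
    calc fderiv ℝ V (x s ξ u) (f (x s ξ u) (u s)) ≤ -α (V (x s ξ u)) ‖x s ξ u‖ :=
          hV.fderiv_le _ _ ((hV.gain.mono (norm_nonneg _) hus).trans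
            ((le_max_right _ _).trans (hs s hsab)))
      _ ≤ -α (V (x s ξ u)) R := neg_le_neg <|
          hV.antitoneOn_rate _ (hV.nonneg _) (norm_nonneg _) hR0 (hR s (ha.trans hsab.1))
      _ ≤ -α ε R := neg_le_neg <| (hV.rate R hR0).mono hε ((le_max_left _ _).trans (hs s hsab))

lemma le_of_le (hV : IsDissipative f V χ α) (hB : IsBIBS f x)
    (hf : LocallyLipschitz (Function.uncurry f)) (hu : IsEssBddInput u) {M t₀ t : ℝ}
    (hM : χ (uNorm u) ≤ M) (ht₀ : 0 ≤ t₀) (ht : t₀ ≤ t) (h₀ : V (x t₀ ξ u) ≤ M) :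
    V (x t ξ u) ≤ M := by
  obtain ⟨R, hξR, hR⟩ := hB.exists_bound ‖ξ‖ (uNorm u)
  refine le_of_nonincreasing_above (v := fun t => V (x t ξ u)) ht
    (hV.contDiff.continuous.comp_continuousOn ((hB.continuousOn hf hu ξ).mono
      fun s hs => ht₀.trans hs.1)) h₀ fun a ha hs => ?_
  have h := hV.le_sub_mul hB hf hu le_rfl (hR ξ u hu le_rfl le_rfl) (ht₀.trans ha.1) ha.2
    fun s hsa => max_le (hV.nonneg _) (hM.trans (hs s hsa).le)
  have hrate : α 0 R = 0 := (hV.rate R ((norm_nonneg ξ).trans hξR)).2.2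
  rwa [hrate, zero_mul, sub_zero] at h

lemma le_max (hV : IsDissipative f V χ α) (hB : IsBIBS f x)
    (hf : LocallyLipschitz (Function.uncurry f)) (hu : IsEssBddInput u) {t : ℝ} (ht : 0 ≤ t) :
    V (x t ξ u) ≤ max (V ξ) (χ (uNorm u)) :=
  hV.le_of_le hB hf hu (le_max_right _ _) le_rfl ht
    (by rw [hB.1.zero hu.1]; exact le_max_left _ _)

lemma exists_time_le (hV : IsDissipative f V χ α) (hB : IsBIBS f x)
    (hf : LocallyLipschitz (Function.uncurry f)) (R c : ℝ) {ε : ℝ} (hε : 0 < ε) :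
    ∃ T, ∀ ξ u, IsEssBddInput u → ‖ξ‖ ≤ R → uNorm u ≤ R → V ξ ≤ c →
      ∀ t, 0 ≤ t → T ≤ t → V (x t ξ u) ≤ max ε (χ (uNorm u)) := by
  obtain ⟨R', hRR', hR'⟩ := hB.exists_bound R R
  refine ⟨c / α ε R', fun ξ u hu hξ huR hc t ht hT => ?_⟩
  by_contra! hgt
  have hrate : 0 < α ε R' := (hV.rate R' ((norm_nonneg ξ).trans (hξ.trans hRR'))).pos hε
  have hall : ∀ s ∈ Icc 0 t, max ε (χ (uNorm u)) ≤ V (x s ξ u) := fun s hs => by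
    by_contra! hlt
    exact (hV.le_of_le hB hf hu (le_max_right _ _) hs.1 hs.2 hlt.le).not_gt hgt
  have hle := hV.le_sub_mul hB hf hu hε.le (hR' ξ u hu hξ huR) le_rfl ht hall
  rw [hB.1.zero hu.1, sub_zero] at hle
  have hct : c ≤ α ε R' * t := (div_le_iff₀' hrate).1 hT
  linarith [(le_max_left _ _).trans_lt hgt]

lemma exists_isClassKL_le (hV : IsDissipative f V χ α) (hB : IsBIBS f x)
    (hf : LocallyLipschitz (Function.uncurry f)) {κ : ℝ → ℝ} (hκ : IsClassK κ)
    (hVκ : ∀ ξ, V ξ ≤ κ ‖ξ‖) :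
    ∃ β, IsClassKL β ∧ ∀ ξ u, IsEssBddInput u → ∀ t, 0 ≤ t →
      V (x t ξ u) ≤ max (β ‖ξ‖ t) (χ (uNorm u) + κ (uNorm u)) := by
  have hlag : ∀ ξ u, IsEssBddInput u → ∀ t, 0 ≤ t → χ (uNorm u) < V (x t ξ u) →
      V (x t ξ u) ≤ κ ‖ξ‖ := fun ξ u hu t ht hlt =>
    ((le_max_iff.1 (hV.le_max hB hf hu ht)).resolve_right hlt.not_ge).trans (hVκ ξ)
  let ι := {q : EuclideanSpace ℝ (Fin n) × (ℝ → EuclideanSpace ℝ (Fin m)) × ℝ //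
    IsEssBddInput q.2.1 ∧ uNorm q.2.1 ≤ ‖q.1‖ ∧ 0 ≤ q.2.2 ∧ χ (uNorm q.2.1) < V (x q.2.2 q.1 q.2.1)}
  obtain ⟨β, hβ, hβV⟩ := exists_isClassKL_bound (ι := ι) (r := fun q => ‖q.1.1‖)
    (t := fun q => q.1.2.2) (a := fun q => V (x q.1.2.2 q.1.1 q.1.2.1)) hκ
    (fun q => norm_nonneg _) (fun q => hV.nonneg _)
    (fun ⟨_, hu, _, ht, hlt⟩ => hlag _ _ hu _ ht hlt) (by
      intro R ε hε
      obtain ⟨T, hT⟩ := hV.exists_time_le hB hf R (κ |R|) hε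
      refine ⟨T, fun ⟨q, hu, hle, ht, hlt⟩ hR hTt => ?_⟩
      have hVc := (hVκ q.1).trans (hκ.mono (norm_nonneg _) (hR.trans (le_abs_self R)))
      exact (le_max_iff.1 (hT _ _ hu hR (hle.trans hR) hVc _ ht hTt)).resolve_right hlt.not_ge)
  refine ⟨β, hβ, fun ξ u hu t ht => ?_⟩
  have hχ0 := hV.gain.nonneg (uNorm_nonneg u)
  have hκ0 := hκ.nonneg (uNorm_nonneg u)
  rcases le_or_gt (V (x t ξ u)) (χ (uNorm u)) with hsmall | hlarge
  · exact le_max_of_le_right (by linarith)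
  rcases le_total (uNorm u) ‖ξ‖ with hle | hge
  · exact le_max_of_le_left (hβV ⟨(ξ, u, t), hu, hle, ht, hlarge⟩)
  · have h := (hlag ξ u hu t ht hlarge).trans (hκ.mono (norm_nonneg ξ) hge)
    exact le_max_of_le_right (by linarith)

end IsDissipative

theorem IsBIBS.isOLIOS_of_isOLIOSLyapunov {n m p : ℕ}
    {f : EuclideanSpace ℝ (Fin n) → EuclideanSpace ℝ (Fin m) → EuclideanSpace ℝ (Fin n)}
    {x : ℝ → EuclideanSpace ℝ (Fin n) → (ℝ → EuclideanSpace ℝ (Fin m)) → EuclideanSpace ℝ (Fin n)}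
    {h : EuclideanSpace ℝ (Fin n) → EuclideanSpace ℝ (Fin p)} {V : EuclideanSpace ℝ (Fin n) → ℝ}
    (hB : IsBIBS f x) (hf : LocallyLipschitz (Function.uncurry f)) (hh : Continuous h)
    (hh0 : h 0 = 0) (hV : IsOLIOSLyapunov f h V) : IsOLIOS h x := by
  obtain ⟨hVs, hV0, ⟨α₁, α₂, hα₁, hα₂, hα⟩, χ, hχ, α₃, hα₃, hα₃', hdec⟩ := hV
  have hD : IsDissipative f V χ α₃ :=
    ⟨hVs.of_le (by exact_mod_cast le_top), hV0, hχ, hα₃, hα₃', hdec⟩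
  obtain ⟨κ, hκ, hκh⟩ := exists_isClassK_norm_bound hh hh0
  obtain ⟨ρ, hρ, hρα⟩ := hα₁.exists_isClassK_leftInvOn
  have hα₂κ := hα₂.1.comp hκ
  have hout : ∀ ξ s, V ξ ≤ s → ‖h ξ‖ ≤ ρ s := fun ξ s hs => by
    rw [← hρα (norm_nonneg (h ξ))]
    exact hρ.mono (hα₁.1.nonneg (norm_nonneg _)) ((hα ξ).1.trans hs)
  obtain ⟨β, hβ, hβV⟩ := hD.exists_isClassKL_le hB hf hα₂κ
    fun ξ => (hα ξ).2.trans (hα₂.1.mono (norm_nonneg _) (hκh ξ))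
  refine ⟨⟨_, _, hβ.comp_left hρ, hρ.comp (hχ.add hα₂κ), fun ξ u hu hub t ht => ?_⟩,
    _, hρ.comp (hα₂.1.add hχ), fun ξ u hu hub t ht => ?_⟩
  · rw [← hρ.map_max ((hβ.1 t ht).nonneg (norm_nonneg ξ))
      ((hχ.add hα₂κ).nonneg (uNorm_nonneg u))]
    exact hout _ _ (hβV ξ u ⟨hu, hub⟩ t ht)
  · have hσ := hα₂.1.add hχ
    rw [← hρ.map_max (hσ.nonneg (norm_nonneg _)) (hσ.nonneg (uNorm_nonneg u))]
    refine hout _ _ ((hD.le_max hB hf ⟨hu, hub⟩ ht).trans (max_le_max ((hα ξ).2.trans ?_) ?_))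
    · exact le_add_of_nonneg_right (hχ.nonneg (norm_nonneg _))
    · exact le_add_of_nonneg_left (hα₂.1.nonneg (uNorm_nonneg u))

/-! ### The value function -/

/-- The part of the output size `a` which exceeds the threshold `b`. It is linear in `a - b` until
it reaches `a`, where it is truncated, so that it equals `a` as soon as `2 * b ≤ a`. -/
def outputMargin (a b : ℝ) : ℝ := max 0 (min a (2 * (a - b)))

lemma outputMargin_nonneg (a b : ℝ) : 0 ≤ outputMargin a b := le_max_left _ _

lemma outputMargin_le {a : ℝ} (ha : 0 ≤ a) (b : ℝ) : outputMargin a b ≤ a :=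
  max_le ha (min_le_left _ _)

lemma outputMargin_anti_right (a : ℝ) : Antitone (outputMargin a) := fun _ _ hb =>
  max_le_max le_rfl (min_le_min le_rfl (by linarith))

lemma outputMargin_eq_self {a b : ℝ} (ha : 0 ≤ a) (hb : 2 * b ≤ a) : outputMargin a b = a := by
  rw [outputMargin, min_eq_left (by linarith), max_eq_right ha]

lemma outputMargin_le_of_le_max {a b b' c : ℝ} (ha : 0 ≤ a) (hc : 2 * c ≤ a)
    (hb' : b' ≤ max c b) : outputMargin a b ≤ outputMargin a b' := by
  rcases le_max_iff.1 hb' with h | h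
  · rw [outputMargin_eq_self ha (b := b') (by linarith)]
    exact outputMargin_le ha b
  · exact outputMargin_anti_right a h

lemma lt_of_outputMargin_pos {a b : ℝ} (h : 0 < outputMargin a b) : b < a := by
  rcases lt_max_iff.1 h with h | h
  · exact absurd h (lt_irrefl _)
  · linarith [h.trans_le (min_le_right _ _)]

lemma outputMargin_le_add (a a' b : ℝ) :
    outputMargin a b ≤ outputMargin a' b + 2 * |a - a'| := by
  have hsub := le_abs_self (a - a')
  have habs := abs_nonneg (a - a')
  have hmin : min a' (2 * (a' - b)) ≤ outputMargin a' b := le_max_right _ _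
  refine max_le (by linarith [outputMargin_nonneg a' b]) ?_
  rcases min_le_iff.1 hmin with h | h
  · exact (min_le_left _ _).trans (by linarith)
  · exact (min_le_right _ _).trans (by linarith)

/-- An increasing weight with values in `[1, 2)`. It rewards late outputs, which makes the value
function decrease strictly along trajectories. -/
def timeWeight (t : ℝ) : ℝ := 2 - 1 / (1 + t)

lemma one_le_timeWeight {t : ℝ} (ht : 0 ≤ t) : 1 ≤ timeWeight t := by
  have : 1 / (1 + t) ≤ 1 := by rw [div_le_one] <;> linarith
  unfold timeWeight
  linarith

lemma timeWeight_le_two {t : ℝ} (ht : 0 ≤ t) : timeWeight t ≤ 2 := by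
  have : 0 ≤ 1 / (1 + t) := by positivity
  unfold timeWeight
  linarith

lemma timeWeight_add_le {τ s T : ℝ} (hτ : τ ∈ Icc 0 1) (hs : s ∈ Icc 0 T) :
    timeWeight s + τ / (2 + T) ^ 2 ≤ timeWeight (τ + s) := by
  obtain ⟨hτ0, hτ1⟩ := hτ
  obtain ⟨hs0, hsT⟩ := hs
  have hdiff : timeWeight (τ + s) - timeWeight s = τ / ((1 + s) * (1 + (τ + s))) := by
    unfold timeWeight
    field_simp
    ring
  have hle : τ / (2 + T) ^ 2 ≤ τ / ((1 + s) * (1 + (τ + s))) := by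
    apply div_le_div_of_nonneg_left hτ0 (by positivity)
    nlinarith
  linarith

section value

variable {n m p : ℕ}
  {f : EuclideanSpace ℝ (Fin n) → EuclideanSpace ℝ (Fin m) → EuclideanSpace ℝ (Fin n)}
  {h : EuclideanSpace ℝ (Fin n) → EuclideanSpace ℝ (Fin p)}
  {x : ℝ → EuclideanSpace ℝ (Fin n) → (ℝ → EuclideanSpace ℝ (Fin m)) → EuclideanSpace ℝ (Fin n)}
  {β : ℝ → ℝ → ℝ} {γ σ : ℝ → ℝ}

/-- The weighted excess over the gain `γ` of the output reached at time `t` from `ξ` under `u`. -/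
def weightedExcess (h : EuclideanSpace ℝ (Fin n) → EuclideanSpace ℝ (Fin p))
    (x : ℝ → EuclideanSpace ℝ (Fin n) → (ℝ → EuclideanSpace ℝ (Fin m)) → EuclideanSpace ℝ (Fin n))
    (γ : ℝ → ℝ) (ξ : EuclideanSpace ℝ (Fin n)) (t : ℝ) (u : ℝ → EuclideanSpace ℝ (Fin m)) : ℝ :=
  outputMargin ‖h (x t ξ u)‖ (γ (uNorm u)) * timeWeight t

/-- The value function: the largest weighted excess of the output over the gain `γ` along all
trajectories starting at `ξ`. -/
def outputValue (h : EuclideanSpace ℝ (Fin n) → EuclideanSpace ℝ (Fin p))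
    (x : ℝ → EuclideanSpace ℝ (Fin n) → (ℝ → EuclideanSpace ℝ (Fin m)) → EuclideanSpace ℝ (Fin n))
    (γ : ℝ → ℝ) (ξ : EuclideanSpace ℝ (Fin n)) : ℝ :=
  sSup {q | ∃ t u, 0 ≤ t ∧ IsEssBddInput u ∧ weightedExcess h x γ ξ t u = q}

/-- The normal form of OLIOS used for the value function: as long as the output exceeds the gain
`γ`, it decays at the rate `β` and is bounded by `σ` of the initial output. -/
structure IsOutputDecay (h : EuclideanSpace ℝ (Fin n) → EuclideanSpace ℝ (Fin p))
    (x : ℝ → EuclideanSpace ℝ (Fin n) → (ℝ → EuclideanSpace ℝ (Fin m)) → EuclideanSpace ℝ (Fin n))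
    (β : ℝ → ℝ → ℝ) (γ σ : ℝ → ℝ) : Prop where
  rate : IsClassKL β
  gain : IsClassKInfty γ
  overshoot : IsClassK σ
  le_rate {ξ u t} : IsEssBddInput u → 0 ≤ t → γ (uNorm u) < ‖h (x t ξ u)‖ →
    ‖h (x t ξ u)‖ ≤ β ‖ξ‖ t
  le_overshoot {ξ u t} : IsEssBddInput u → 0 ≤ t → γ (uNorm u) < ‖h (x t ξ u)‖ →
    ‖h (x t ξ u)‖ ≤ σ ‖h ξ‖

lemma IsOLIOS.exists_isOutputDecay (hO : IsOLIOS h x) : ∃ β γ σ, IsOutputDecay h x β γ σ := by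
  obtain ⟨⟨β, γ, hβ, hγ, hios⟩, σ, hσ, hol⟩ := hO
  refine ⟨β, fun s => (σ s + γ s) + s, σ, hβ, (hσ.add hγ).add_id, hσ,
    fun {ξ u t} hu ht hlt => (le_max_iff.1 (hios ξ u hu.1 hu.2 t ht)).resolve_right fun hle => ?_,
    fun {ξ u t} hu ht hlt => (le_max_iff.1 (hol ξ u hu.1 hu.2 t ht)).resolve_right fun hle => ?_⟩
  all_goals
    have hc := uNorm_nonneg u
    linarith [hσ.nonneg hc, hγ.nonneg hc]

namespace IsOutputDecay

lemma weightedExcess_le (hD : IsOutputDecay h x β γ σ) (ξ : EuclideanSpace ℝ (Fin n)) {t : ℝ}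
    {u : ℝ → EuclideanSpace ℝ (Fin m)} (ht : 0 ≤ t) (hu : IsEssBddInput u) :
    weightedExcess h x γ ξ t u ≤ 2 * σ ‖h ξ‖ := by
  have hσ := hD.overshoot.nonneg (norm_nonneg (h ξ))
  unfold weightedExcess
  rcases (outputMargin_nonneg ‖h (x t ξ u)‖ (γ (uNorm u))).eq_or_lt with hzero | hpos
  · rw [← hzero, zero_mul]
    positivity
  · have hmargin : outputMargin ‖h (x t ξ u)‖ (γ (uNorm u)) ≤ σ ‖h ξ‖ :=
      (outputMargin_le (norm_nonneg _) _).trans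
        (hD.le_overshoot hu ht (lt_of_outputMargin_pos hpos))
    rw [mul_comm]
    exact mul_le_mul (timeWeight_le_two ht) hmargin (outputMargin_nonneg _ _) two_pos.le

lemma weightedExcess_le_outputValue (hD : IsOutputDecay h x β γ σ)
    (ξ : EuclideanSpace ℝ (Fin n)) {t : ℝ} {u : ℝ → EuclideanSpace ℝ (Fin m)} (ht : 0 ≤ t)
    (hu : IsEssBddInput u) :
    weightedExcess h x γ ξ t u ≤ outputValue h x γ ξ := by
  refine le_csSup ⟨2 * σ ‖h ξ‖, ?_⟩ ⟨t, u, ht, hu, rfl⟩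
  rintro _ ⟨s, v, hs, hv, rfl⟩
  exact hD.weightedExcess_le ξ hs hv

lemma norm_le_outputValue (hD : IsOutputDecay h x β γ σ) (hB : IsBIBS f x)
    (ξ : EuclideanSpace ℝ (Fin n)) : ‖h ξ‖ ≤ outputValue h x γ ξ := by
  have hu := isEssBddInput_const (0 : EuclideanSpace ℝ (Fin m))
  have hnorm : uNorm (fun _ : ℝ => (0 : EuclideanSpace ℝ (Fin m))) = 0 :=
    le_antisymm (by simpa using uNorm_const_le (0 : EuclideanSpace ℝ (Fin m))) (uNorm_nonneg _)
  refine le_trans (le_of_eq ?_) (hD.weightedExcess_le_outputValue ξ le_rfl hu)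
  rw [weightedExcess, hB.1.zero hu.1, hnorm, hD.gain.1.2.2,
    outputMargin_eq_self (norm_nonneg _) (by simp)]
  norm_num [timeWeight]

end IsOutputDecay

lemma outputValue_le {ξ : EuclideanSpace ℝ (Fin n)} {M : ℝ}
    (hM : ∀ t u, 0 ≤ t → IsEssBddInput u → weightedExcess h x γ ξ t u ≤ M) :
    outputValue h x γ ξ ≤ M := by
  refine csSup_le ⟨_, 0, fun _ => 0, le_rfl, isEssBddInput_const 0, rfl⟩ ?_
  rintro _ ⟨t, u, ht, hu, rfl⟩
  exact hM t u ht hu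

lemma exists_lt_weightedExcess {ξ : EuclideanSpace ℝ (Fin n)} {M : ℝ}
    (hM : M < outputValue h x γ ξ) :
    ∃ t u, 0 ≤ t ∧ IsEssBddInput u ∧ M < weightedExcess h x γ ξ t u := by
  by_contra! hle
  exact hM.not_ge (outputValue_le hle)

lemma IsClassKInfty.exists_le_of_le {α : ℝ → ℝ} (hα : IsClassKInfty α) (M : ℝ) :
    ∃ U, ∀ s, α s ≤ M → s ≤ U := by
  obtain ⟨U, hU⟩ := (hα.2.eventually (eventually_gt_atTop M)).exists_forall_of_atTop
  exact ⟨U, fun s hs => le_of_not_ge fun hc => absurd hs (not_le.2 (hU s hc))⟩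

namespace IsOutputDecay

/- Large inputs raise the gain above every output and late times lie in the tail of `β`, so both
are irrelevant for a positive value. -/
lemma exists_bounds (hD : IsOutputDecay h x β γ σ) (hh : Continuous h) (hh0 : h 0 = 0)
    (R : ℝ) {r : ℝ} (hr : 0 < r) :
    ∃ U T, 0 ≤ T ∧ ∀ ξ u t, ‖ξ‖ ≤ R → IsEssBddInput u → 0 ≤ t →
      r ≤ weightedExcess h x γ ξ t u → uNorm u ≤ U ∧ t ≤ T := by
  obtain ⟨κ, hκ, hκh⟩ := exists_isClassK_norm_bound hh hh0
  obtain ⟨U, hU⟩ := hD.gain.exists_le_of_le (σ (κ |R|))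
  obtain ⟨T, hT⟩ := (((hD.rate.2 |R| (abs_nonneg R)).2).eventually
    (gt_mem_nhds (half_pos hr))).exists_forall_of_atTop
  refine ⟨U, max T 0, le_max_right _ _, fun ξ u t hξ hu ht hle => ?_⟩
  have hξR : ‖ξ‖ ≤ |R| := hξ.trans (le_abs_self R)
  have hmargin : r / 2 ≤ outputMargin ‖h (x t ξ u)‖ (γ (uNorm u)) := by
    rw [div_le_iff₀ two_pos]
    exact hle.trans (mul_le_mul_of_nonneg_left (timeWeight_le_two ht) (outputMargin_nonneg _ _))
  have hlt := lt_of_outputMargin_pos ((half_pos hr).trans_le hmargin)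
  refine ⟨hU _ (hlt.le.trans ((hD.le_overshoot hu ht hlt).trans (hD.overshoot.mono (norm_nonneg _)
    ((hκh ξ).trans (hκ.mono (norm_nonneg _) hξR))))), ?_⟩
  by_contra! hTt
  have hsmall : β |R| t < r / 2 := hT t ((le_max_left _ _).trans hTt.le)
  exact hsmall.not_ge <| hmargin.trans <| (outputMargin_le (norm_nonneg _) _).trans <|
    (hD.le_rate hu ht hlt).trans ((hD.rate.1 t ht).mono (norm_nonneg _) hξR)

lemma exists_lipschitz (hD : IsOutputDecay h x β γ σ) (hB : IsBIBS f x)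
    (hf : LocallyLipschitz (Function.uncurry f)) (hh : LocallyLipschitz h) (hh0 : h 0 = 0)
    (R : ℝ) {r : ℝ} (hr : 0 < r) :
    ∃ C, 0 ≤ C ∧ ∀ ξ ξ', ‖ξ‖ ≤ R → ‖ξ'‖ ≤ R → r ≤ outputValue h x γ ξ →
      outputValue h x γ ξ ≤ outputValue h x γ ξ' + C * ‖ξ - ξ'‖ := by
  obtain ⟨U, T, -, hUT⟩ := hD.exists_bounds hh.continuous hh0 R (half_pos hr)
  obtain ⟨R', -, hR'⟩ := hB.exists_bound R U
  obtain ⟨C, hC, hflow⟩ := hB.exists_lipschitz_flow hf R U T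
  obtain ⟨K, hK⟩ := LocallyLipschitzOn.exists_lipschitzOnWith_of_compact
    (isCompact_closedBall (0 : EuclideanSpace ℝ (Fin n)) R') hh.locallyLipschitzOn
  refine ⟨4 * K * C, by positivity, fun ξ ξ' hξ hξ' hle => ?_⟩
  by_contra! hlt
  obtain ⟨t, u, ht, hu, hexcess⟩ := exists_lt_weightedExcess
    (max_lt hlt (by linarith : r / 2 < outputValue h x γ ξ))
  obtain ⟨huU, htT⟩ := hUT ξ u t hξ hu ht ((le_max_right _ _).trans hexcess.le)
  have hdist : |‖h (x t ξ u)‖ - ‖h (x t ξ' u)‖| ≤ K * (C * ‖ξ - ξ'‖) := by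
    refine (abs_norm_sub_norm_le _ _).trans ((hK.norm_sub_le
      (mem_closedBall_zero_iff.2 (hR' ξ u hu hξ huU t ht))
      (mem_closedBall_zero_iff.2 (hR' ξ' u hu hξ' huU t ht))).trans ?_)
    gcongr
    exact hflow ξ ξ' u hu hξ hξ' huU t ⟨ht, htT⟩
  refine ((le_max_left _ _).trans_lt hexcess).not_ge ?_
  calc weightedExcess h x γ ξ t u
      ≤ (outputMargin ‖h (x t ξ' u)‖ (γ (uNorm u)) + 2 * (K * (C * ‖ξ - ξ'‖))) * timeWeight t := by
        have hw := one_le_timeWeight ht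
        unfold weightedExcess
        gcongr
        exact (outputMargin_le_add _ _ _).trans (by gcongr)
    _ = weightedExcess h x γ ξ' t u + 2 * K * C * ‖ξ - ξ'‖ * timeWeight t := by
        rw [weightedExcess]; ring
    _ ≤ outputValue h x γ ξ' + 2 * K * C * ‖ξ - ξ'‖ * 2 := by
        gcongr
        · exact hD.weightedExcess_le_outputValue ξ' ht hu
        · exact timeWeight_le_two ht
    _ = outputValue h x γ ξ' + 4 * K * C * ‖ξ - ξ'‖ := by ring

/- An excess seen from the point `x τ η μ` at time `s` is seen from `η` at time `τ + s`, with a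
larger weight. The threshold `5 * γ ‖μ‖` keeps the initial stretch of constant input `μ` from
lowering the margin. -/
lemma weightedExcess_add_le_outputValue (hD : IsOutputDecay h x β γ σ) (hB : IsBIBS f x)
    (hf : LocallyLipschitz (Function.uncurry f)) {η : EuclideanSpace ℝ (Fin n)}
    {μ : EuclideanSpace ℝ (Fin m)} {v : ℝ → EuclideanSpace ℝ (Fin m)} {τ s T r : ℝ}
    (hv : IsEssBddInput v) (hτ : τ ∈ Icc 0 1) (hs : s ∈ Icc 0 T)
    (hrη : r ≤ outputValue h x γ η) (hμη : 5 * γ ‖μ‖ ≤ outputValue h x γ η)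
    (hlarge : 7 / 8 * outputValue h x γ η ≤
      weightedExcess h x γ (x τ η fun _ => μ) s v) :
    weightedExcess h x γ (x τ η fun _ => μ) s v + 7 / 16 * r / (2 + T) ^ 2 * τ ≤
      outputValue h x γ η := by
  have hmem := hD.weightedExcess_le_outputValue η (add_nonneg hτ.1 hs.1)
    ((isEssBddInput_const μ).concat (τ := τ) hv)
  unfold weightedExcess at hmem hlarge ⊢
  rw [hB.flow_concat hf (isEssBddInput_const μ) hv η hτ.1 hs.1] at hmem
  set a := ‖h (x s (x τ η fun _ => μ) v)‖
  have ha : 0 ≤ a := norm_nonneg _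
  have hb := outputMargin_nonneg a (γ (uNorm v))
  have hhalf : 7 / 16 * outputValue h x γ η ≤ outputMargin a (γ (uNorm v)) := by
    linarith [mul_le_mul_of_nonneg_left (timeWeight_le_two hs.1) hb]
  have hmargin : outputMargin a (γ (uNorm v)) ≤
      outputMargin a (γ (uNorm (concatInput τ (fun _ => μ) v))) := by
    refine outputMargin_le_of_le_max ha (c := γ ‖μ‖)
      (by linarith [outputMargin_le ha (γ (uNorm v))]) ?_
    rw [← hD.gain.1.map_max (norm_nonneg μ) (uNorm_nonneg v)]
    exact hD.gain.1.mono (uNorm_nonneg _) (((isEssBddInput_const μ).uNorm_concat_le hv).trans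
      (max_le_max (uNorm_const_le μ) le_rfl))
  have hstep : 0 ≤ τ / (2 + T) ^ 2 := div_nonneg hτ.1 (sq_nonneg _)
  have hweight := one_le_timeWeight hs.1
  calc outputMargin a (γ (uNorm v)) * timeWeight s + 7 / 16 * r / (2 + T) ^ 2 * τ
      = outputMargin a (γ (uNorm v)) * timeWeight s + 7 / 16 * r * (τ / (2 + T) ^ 2) := by ring
    _ ≤ outputMargin a (γ (uNorm v)) * timeWeight s +
          outputMargin a (γ (uNorm v)) * (τ / (2 + T) ^ 2) := by
        gcongr
        linarith
    _ = outputMargin a (γ (uNorm v)) * (timeWeight s + τ / (2 + T) ^ 2) := by ring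
    _ ≤ outputMargin a (γ (uNorm (concatInput τ (fun _ => μ) v))) * timeWeight (τ + s) := by
        gcongr
        · exact hb.trans hmargin
        · exact timeWeight_add_le hτ hs
    _ ≤ outputValue h x γ η := hmem

lemma exists_decrease (hD : IsOutputDecay h x β γ σ) (hB : IsBIBS f x)
    (hf : LocallyLipschitz (Function.uncurry f)) (hh : Continuous h) (hh0 : h 0 = 0) (R U : ℝ)
    {r : ℝ} (hr : 0 < r) :
    ∃ c, 0 < c ∧ ∀ η μ, ‖η‖ ≤ R → ‖μ‖ ≤ U → r ≤ outputValue h x γ η →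
      5 * γ ‖μ‖ ≤ outputValue h x γ η → ∀ τ ∈ Icc (0 : ℝ) 1,
      outputValue h x γ (x τ η fun _ => μ) ≤ outputValue h x γ η - c * τ := by
  obtain ⟨R', -, hR'⟩ := hB.exists_bound R U
  obtain ⟨_, T, hT, hUT⟩ := hD.exists_bounds hh hh0 R' (by positivity : 0 < 7 / 8 * r)
  refine ⟨min (7 / 16 * r / (2 + T) ^ 2) (r / 8), by positivity,
    fun η μ hη hμ hrη hμη τ hτ => outputValue_le fun s v hs hv => ?_⟩
  rcases le_total (weightedExcess h x γ (x τ η fun _ => μ) s v) (7 / 8 * outputValue h x γ η)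
    with hsmall | hlarge
  · have hc : min (7 / 16 * r / (2 + T) ^ 2) (r / 8) * τ ≤ r / 8 * 1 := by
      gcongr
      exacts [hτ.1, min_le_right _ _, hτ.2]
    linarith
  · have hη' : ‖x τ η fun _ => μ‖ ≤ R' :=
      hR' η _ (isEssBddInput_const μ) hη ((uNorm_const_le μ).trans hμ) τ hτ.1
    have hsT : s ≤ T := (hUT _ v s hη' hv hs (by linarith)).2
    have hc : min (7 / 16 * r / (2 + T) ^ 2) (r / 8) * τ ≤ 7 / 16 * r / (2 + T) ^ 2 * τ :=
      mul_le_mul_of_nonneg_right (min_le_left _ _) hτ.1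
    linarith [hD.weightedExcess_add_le_outputValue hB hf hv hτ ⟨hs, hsT⟩ hrη hμη hlarge]

end IsOutputDecay

end value

/-! ### Mollification with a variable radius -/

section mollification

open scoped ContDiff Convolution Manifold

lemma exists_contDiff_pos_lt_of_antitone {D : ℝ → ℝ} (hD : Antitone D) (hpos : ∀ r, 0 < D r) :
    ∃ q : ℝ → ℝ, ContDiff ℝ ∞ q ∧ ∀ r, 0 < q r ∧ q r ≤ D r := by
  obtain ⟨q, hq⟩ := exists_contMDiffMap_forall_mem_convex_of_local_const (n := (⊤ : ℕ∞)) 𝓘(ℝ, ℝ)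
    (fun r => convex_Ioc (0 : ℝ) (D r)) fun r => ⟨D (r + 1), by
      filter_upwards [Iio_mem_nhds (lt_add_one r)] with s hs using ⟨hpos _, hD (le_of_lt hs)⟩⟩
  exact ⟨q, q.contMDiff.contDiff, hq⟩

/- Averaging a small smooth function over `[s, s + 1]` makes the derivative small as well. -/
lemma exists_contDiff_pos_norm_deriv_le_of_antitone {D : ℝ → ℝ} (hD : Antitone D)
    (hpos : ∀ r, 0 < D r) :
    ∃ g : ℝ → ℝ, ContDiff ℝ ∞ g ∧ ∀ r, 0 < g r ∧ g r ≤ D r ∧ ‖deriv g r‖ ≤ D r := by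
  obtain ⟨q, hq, hqD⟩ := exists_contDiff_pos_lt_of_antitone hD hpos
  set Q : ℝ → ℝ := fun r => ∫ s in (0 : ℝ)..r, q s
  have hintegrable : ∀ a b, IntervalIntegrable q volume a b := hq.continuous.intervalIntegrable
  have hderiv : ∀ r, HasDerivAt Q (q r) r := fun r =>
    intervalIntegral.integral_hasDerivAt_right (hintegrable 0 r)
      (hq.continuous.stronglyMeasurableAtFilter _ _) hq.continuous.continuousAt
  have hQ : ContDiff ℝ ∞ Q := contDiff_infty_iff_deriv.2
    ⟨fun r => (hderiv r).differentiableAt, by rwa [funext fun r => (hderiv r).deriv]⟩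
  have hg : ∀ r, Q (r + 1) - Q r = ∫ s in r..r + 1, q s := fun r =>
    intervalIntegral.integral_interval_sub_left (hintegrable _ _) (hintegrable _ _)
  refine ⟨fun r => Q (r + 1) - Q r, (hQ.comp (contDiff_id.add contDiff_const)).sub hQ,
    fun r => ⟨?_, ?_, ?_⟩⟩
  · simp only [hg]
    exact intervalIntegral.intervalIntegral_pos_of_pos (hintegrable _ _) (fun s => (hqD s).1)
      (lt_add_one r)
  · simp only [hg]
    calc ∫ s in r..r + 1, q s ≤ ∫ _ in r..r + 1, D r :=
          intervalIntegral.integral_mono_on (by linarith) (hintegrable _ _) intervalIntegrable_const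
            fun s hs => (hqD s).2.trans (hD hs.1)
      _ = D r := by simp
  · have hderiv_sub : HasDerivAt (fun r => Q (r + 1) - Q r) (q (r + 1) - q r) r :=
      ((hderiv (r + 1)).comp_add_const r 1).sub (hderiv r)
    rw [hderiv_sub.deriv, Real.norm_eq_abs]
    exact abs_le.2 ⟨by linarith [(hqD (r + 1)).1, (hqD r).2],
      by linarith [(hqD (r + 1)).2.trans (hD (le_add_of_nonneg_right zero_le_one)), (hqD r).1]⟩

variable {E : Type*} [NormedAddCommGroup E] [InnerProductSpace ℝ E]

lemma two_mul_le_exp_sq (a : ℝ) : 2 * a ≤ Real.exp (a ^ 2) := by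
  nlinarith [Real.add_one_le_exp (a ^ 2), sq_nonneg (a - 1)]

lemma norm_fderiv_comp_norm_sq_le {g : ℝ → ℝ} (hg : Differentiable ℝ g) {M : ℝ} (w : E)
    (hM : ‖deriv g (‖w‖ ^ 2)‖ ≤ Real.exp (-‖w‖ ^ 2) * M) :
    ‖fderiv ℝ (fun w : E => g (‖w‖ ^ 2)) w‖ ≤ M := by
  have hderiv : HasFDerivAt (fun w : E => g (‖w‖ ^ 2))
      (deriv g (‖w‖ ^ 2) • (2 : ℕ) • innerSL ℝ w) w :=
    (hg _).hasDerivAt.comp_hasFDerivAt w (hasStrictFDerivAt_norm_sq w).hasFDerivAt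
  have hexp : Real.exp (-‖w‖ ^ 2) * (2 * ‖w‖) ≤ 1 := by
    rw [Real.exp_neg, inv_mul_le_iff₀ (Real.exp_pos _), mul_one]
    exact two_mul_le_exp_sq _
  have hM0 : 0 ≤ M := nonneg_of_mul_nonneg_right ((norm_nonneg _).trans hM) (Real.exp_pos _)
  calc ‖fderiv ℝ (fun w : E => g (‖w‖ ^ 2)) w‖ = ‖deriv g (‖w‖ ^ 2)‖ * (2 * ‖w‖) := by
        rw [hderiv.fderiv, norm_smul, ← Nat.cast_smul_eq_nsmul ℝ, norm_smul, innerSL_apply_norm]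
        simp
    _ ≤ Real.exp (-‖w‖ ^ 2) * M * (2 * ‖w‖) := by gcongr
    _ = Real.exp (-‖w‖ ^ 2) * (2 * ‖w‖) * M := by ring
    _ ≤ M := mul_le_of_le_one_left hM0 hexp

variable (E) in
/- The radius is `g (‖ξ‖ ^ 2)`; the factor `exp (-r)` absorbs the derivative `2 * ‖ξ‖` of the
squared norm. -/
lemma exists_smooth_radius {δ : ℝ → ℝ} (hδ : Antitone δ) (hpos : ∀ r, 0 < δ r) :
    ∃ ε : E → ℝ, ContDiff ℝ ∞ ε ∧ ∀ ξ, 0 < ε ξ ∧ ε ξ ≤ 1 ∧ ε ξ ≤ δ ‖ξ‖ ∧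
      ∀ ξ', ‖ξ' - ξ‖ ≤ 1 → |ε ξ' - ε ξ| ≤ δ ‖ξ‖ * ‖ξ' - ξ‖ := by
  set D : ℝ → ℝ := fun r => min (Real.exp (-r)) 1 * min 1 (δ (√r + 1))
  have hD : Antitone D := fun r s hrs => by
    have hδ' := hδ (add_le_add_left (Real.sqrt_le_sqrt hrs) 1)
    have := (hpos (√s + 1)).le
    dsimp only [D]
    gcongr
  have hDpos : ∀ r, 0 < D r := fun r =>
    mul_pos (lt_min (Real.exp_pos _) one_pos) (lt_min one_pos (hpos _))
  have hDle : ∀ r, D r ≤ min 1 (δ (√r + 1)) := fun r =>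
    mul_le_of_le_one_left (le_min zero_le_one (hpos _).le) (min_le_right _ _)
  obtain ⟨g, hg, hgD⟩ := exists_contDiff_pos_norm_deriv_le_of_antitone hD hDpos
  have hε : ContDiff ℝ ∞ fun w : E => g (‖w‖ ^ 2) := hg.comp (contDiff_norm_sq ℝ)
  have hnorm : ∀ w : E, ‖fderiv ℝ (fun w : E => g (‖w‖ ^ 2)) w‖ ≤ δ (‖w‖ + 1) := fun w => by
    refine norm_fderiv_comp_norm_sq_le (hg.differentiable (by simp)) w ((hgD _).2.2.trans
      (mul_le_mul (min_le_left _ _) ?_ (le_min zero_le_one (hpos _).le) (Real.exp_pos _).le))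
    simp
  refine ⟨fun w => g (‖w‖ ^ 2), hε, fun ξ => ⟨(hgD _).1,
    (hgD _).2.1.trans ((hDle _).trans (min_le_left _ _)),
    (hgD _).2.1.trans ((hDle _).trans ((min_le_right _ _).trans (hδ (by simp)))),
    fun ξ' hξ' => ?_⟩⟩
  refine (convex_closedBall ξ 1).norm_image_sub_le_of_norm_fderiv_le
    (fun w _ => hε.differentiable (by simp) w) (fun w hw => (hnorm w).trans (hδ ?_))
    (Metric.mem_closedBall_self zero_le_one) (mem_closedBall_iff_norm.2 hξ')
  linarith [norm_le_norm_add_norm_sub w ξ, mem_closedBall_iff_norm.1 hw]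

lemma norm_smul_le_of_mem_closedBall {r : ℝ} (hr : 0 ≤ r) {z : E}
    (hz : z ∈ Metric.closedBall 0 1) : ‖r • z‖ ≤ r := by
  rw [norm_smul, Real.norm_of_nonneg hr]
  exact mul_le_of_le_one_right hr (mem_closedBall_zero_iff.1 hz)

lemma sub_smul_mem_closedBall {r : ℝ} (hr : 0 ≤ r) (ξ : E) {z : E}
    (hz : z ∈ Metric.closedBall 0 1) : ξ - r • z ∈ Metric.closedBall ξ r := by
  rw [mem_closedBall_iff_norm, sub_sub_cancel_left, norm_neg]
  exact norm_smul_le_of_mem_closedBall hr hz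

lemma fderiv_le_of_eventually_le_sub {W : E → ℝ} {ξ v : E} {c : ℝ} (hW : DifferentiableAt ℝ W ξ)
    (hdec : ∀ᶠ t in 𝓝[>] (0 : ℝ), W (ξ + t • v) ≤ W ξ - c * t) : fderiv ℝ W ξ v ≤ -c := by
  refine le_of_tendsto (hW.hasFDerivAt.hasLineDerivAt v).tendsto_slope_zero_right ?_
  filter_upwards [hdec, self_mem_nhdsWithin] with t ht ht0
  rw [smul_eq_mul, inv_mul_le_iff₀ ht0]
  linarith

variable [FiniteDimensional ℝ E] [MeasurableSpace E] [BorelSpace E]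

variable (E) in
/-- The standard mollifier: smooth, nonnegative, supported in the unit ball, of integral one. -/
def unitMollifier : E → ℝ :=
  (⟨1 / 2, 1, by norm_num, by norm_num⟩ : ContDiffBump (0 : E)).normed volume

lemma contDiff_unitMollifier : ContDiff ℝ ∞ (unitMollifier E) := ContDiffBump.contDiff_normed _

lemma hasCompactSupport_unitMollifier : HasCompactSupport (unitMollifier E) :=
  ContDiffBump.hasCompactSupport_normed _

lemma unitMollifier_nonneg (z : E) : 0 ≤ unitMollifier E z := ContDiffBump.nonneg_normed _ z

lemma unitMollifier_eq_zero {z : E} (hz : z ∉ Metric.closedBall 0 1) : unitMollifier E z = 0 := by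
  rw [← Function.notMem_support, unitMollifier, ContDiffBump.support_normed_eq]
  exact fun h => hz (Metric.ball_subset_closedBall h)

lemma integrable_unitMollifier_mul {F : E → ℝ} (hF : Continuous F) :
    Integrable fun z => unitMollifier E z * F z :=
  (contDiff_unitMollifier.continuous.mul hF).integrable_of_hasCompactSupport
    hasCompactSupport_unitMollifier.mul_right

lemma integral_unitMollifier_mul_const (M : ℝ) : ∫ z, unitMollifier E z * M = M := by
  rw [integral_mul_const, unitMollifier, ContDiffBump.integral_normed, one_mul]

lemma integral_unitMollifier_mul_mono {F G : E → ℝ} (hF : Continuous F) (hG : Continuous G)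
    (hFG : ∀ z ∈ Metric.closedBall 0 1, F z ≤ G z) :
    ∫ z, unitMollifier E z * F z ≤ ∫ z, unitMollifier E z * G z := by
  refine integral_mono (integrable_unitMollifier_mul hF) (integrable_unitMollifier_mul hG)
    fun z => ?_
  by_cases hz : z ∈ Metric.closedBall 0 1
  · exact mul_le_mul_of_nonneg_left (hFG z hz) (unitMollifier_nonneg z)
  · simp [unitMollifier_eq_zero hz]

/-- The mollification of `Φ` whose averaging radius at `ξ` is `ε ξ`. -/
def mollify (ε Φ : E → ℝ) (ξ : E) : ℝ := ∫ z, unitMollifier E z * Φ (ξ - ε ξ • z)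

variable {ε Φ : E → ℝ}

lemma mollify_le (hΦ : Continuous Φ) {ξ : E} (hε : 0 ≤ ε ξ) {M : ℝ}
    (hM : ∀ η ∈ Metric.closedBall ξ (ε ξ), Φ η ≤ M) : mollify ε Φ ξ ≤ M := by
  rw [← integral_unitMollifier_mul_const (E := E) M]
  exact integral_unitMollifier_mul_mono (by fun_prop) continuous_const fun z hz =>
    hM _ (sub_smul_mem_closedBall hε ξ hz)

lemma le_mollify (hΦ : Continuous Φ) {ξ : E} (hε : 0 ≤ ε ξ) {M : ℝ}
    (hM : ∀ η ∈ Metric.closedBall ξ (ε ξ), M ≤ Φ η) : M ≤ mollify ε Φ ξ := by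
  rw [← integral_unitMollifier_mul_const (E := E) M]
  exact integral_unitMollifier_mul_mono continuous_const (by fun_prop) fun z hz =>
    hM _ (sub_smul_mem_closedBall hε ξ hz)

/- Substituting `w = ε ξ • z` turns the average into a convolution whose kernel depends smoothly
on the parameter `ξ`. -/
lemma mollify_eq_convolution {ξ : E} (hε : 0 < ε ξ) :
    mollify ε Φ ξ = (Φ ⋆[ContinuousLinearMap.mul ℝ ℝ, volume] fun w =>
      unitMollifier E ((ε ξ)⁻¹ • w) * (ε ξ ^ Module.finrank ℝ E)⁻¹) ξ := by
  have hsubst := Measure.integral_comp_smul (volume : Measure E)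
    (fun w => unitMollifier E ((ε ξ)⁻¹ • w) * Φ (ξ - w)) (ε ξ)
  simp only [smul_smul, inv_mul_cancel₀ hε.ne', one_smul, smul_eq_mul] at hsubst
  rw [abs_of_pos (by positivity)] at hsubst
  simp only [convolution_def, ContinuousLinearMap.mul_apply']
  rw [mollify, hsubst, ← integral_const_mul, ← integral_sub_left_eq_self _ volume ξ]
  refine integral_congr_ae (Eventually.of_forall fun w => ?_)
  simp only [sub_sub_cancel]
  ring

lemma contDiff_mollify (hΦ : Continuous Φ) (hε : ContDiff ℝ ∞ ε) (hpos : ∀ ξ, 0 < ε ξ)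
    (hle : ∀ ξ, ε ξ ≤ 1) : ContDiff ℝ ∞ (mollify ε Φ) := by
  refine contDiffOn_univ.1 (ContDiffOn.congr ?_ fun ξ _ => mollify_eq_convolution (hpos ξ))
  refine contDiffOn_convolution_right_with_param_comp (ContinuousLinearMap.mul ℝ ℝ)
    (k := Metric.closedBall 0 1) contDiffOn_id isOpen_univ (isCompact_closedBall _ _)
    (fun ξ w _ hw => ?_) hΦ.locallyIntegrable (ContDiff.contDiffOn ?_)
  · have hw' : (ε ξ)⁻¹ • w ∉ Metric.closedBall 0 1 := fun hmem => hw <| by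
      have := norm_smul_le_of_mem_closedBall (hpos ξ).le hmem
      rw [smul_inv_smul₀ (hpos ξ).ne'] at this
      exact mem_closedBall_zero_iff.2 (this.trans (hle ξ))
    rw [unitMollifier_eq_zero hw', zero_mul]
  · have hε' : ContDiff ℝ ∞ fun q : E × E => ε q.1 := hε.comp contDiff_fst
    exact (contDiff_unitMollifier.comp ((hε'.inv fun q => (hpos q.1).ne').smul contDiff_snd)).mul
      ((hε'.pow _).inv fun q => (pow_pos (hpos q.1) _).ne')

lemma mollify_add_le_sub (hΦ : Continuous Φ) {ξ w : E} (hε : 0 ≤ ε ξ) {d c : ℝ}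
    (hd : |ε (ξ + w) - ε ξ| ≤ d)
    (hdec : ∀ η ∈ Metric.closedBall ξ (ε ξ), ∀ η' ∈ Metric.closedBall (η + w) d,
      Φ η' ≤ Φ η - c) :
    mollify ε Φ (ξ + w) ≤ mollify ε Φ ξ - c := by
  have hsub : mollify ε Φ ξ - c = ∫ z, unitMollifier E z * (Φ (ξ - ε ξ • z) - c) := by
    simp only [mul_sub]
    rw [integral_sub (integrable_unitMollifier_mul (by fun_prop))
      (integrable_unitMollifier_mul continuous_const), integral_unitMollifier_mul_const, mollify]
  rw [hsub]
  refine integral_unitMollifier_mul_mono (by fun_prop) (by fun_prop) fun z hz =>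
    hdec _ (sub_smul_mem_closedBall hε ξ hz) _ ?_
  have hshift : ξ + w - ε (ξ + w) • z - (ξ - ε ξ • z + w) = -((ε (ξ + w) - ε ξ) • z) := by
    rw [sub_smul]
    abel
  rw [mem_closedBall_iff_norm, hshift, norm_neg, norm_smul]
  exact (mul_le_of_le_one_right (abs_nonneg _) (mem_closedBall_zero_iff.1 hz)).trans hd

theorem exists_smooth_approx (hΦ : Continuous Φ) {δ : ℝ → ℝ} (hδ : Antitone δ)
    (hpos : ∀ r, 0 < δ r) :
    ∃ W : E → ℝ, ContDiff ℝ ∞ W ∧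
      (∀ ξ M, (∀ η ∈ Metric.closedBall ξ (δ ‖ξ‖), Φ η ≤ M) → W ξ ≤ M) ∧
      (∀ ξ M, (∀ η ∈ Metric.closedBall ξ (δ ‖ξ‖), M ≤ Φ η) → M ≤ W ξ) ∧
      ∀ ξ v c t₀, 0 < t₀ → (∀ η ∈ Metric.closedBall ξ (δ ‖ξ‖), ∀ t ∈ Ioo 0 t₀,
        ∀ η' ∈ Metric.closedBall (η + t • v) (t * ‖v‖ * δ ‖ξ‖), Φ η' ≤ Φ η - c * t) →
        fderiv ℝ W ξ v ≤ -c := by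
  obtain ⟨ε, hε, hradius⟩ := exists_smooth_radius E hδ hpos
  choose hεpos hε1 hεδ hεlip using hradius
  have hball : ∀ ξ, Metric.closedBall ξ (ε ξ) ⊆ Metric.closedBall ξ (δ ‖ξ‖) := fun ξ =>
    Metric.closedBall_subset_closedBall (hεδ ξ)
  have hW : ContDiff ℝ ∞ (mollify ε Φ) := contDiff_mollify hΦ hε hεpos hε1
  refine ⟨mollify ε Φ, hW,
    fun ξ M hM => mollify_le hΦ (hεpos ξ).le fun η hη => hM η (hball ξ hη),
    fun ξ M hM => le_mollify hΦ (hεpos ξ).le fun η hη => hM η (hball ξ hη),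
    fun ξ v c t₀ ht₀ hdec => fderiv_le_of_eventually_le_sub (hW.differentiable (by simp) ξ) ?_⟩
  filter_upwards [Ioo_mem_nhdsGT (lt_min ht₀ (by positivity : 0 < 1 / (‖v‖ + 1)))] with t ht
  obtain ⟨htt₀, htv⟩ := lt_min_iff.1 ht.2
  have hnorm : ‖ξ + t • v - ξ‖ = t * ‖v‖ := by
    rw [add_sub_cancel_left, norm_smul, Real.norm_of_nonneg ht.1.le]
  have hle : t * ‖v‖ ≤ 1 := by
    rw [lt_div_iff₀ (by positivity)] at htv
    linarith [ht.1]
  refine mollify_add_le_sub hΦ (hεpos ξ).le (d := t * ‖v‖ * δ ‖ξ‖) ?_ fun η hη =>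
    hdec η (hball ξ hη) t ⟨ht.1, htt₀⟩
  have hlip := hεlip ξ (ξ + t • v) (hnorm.trans_le hle)
  rwa [hnorm, mul_comm] at hlip

end mollification

/-! ### Smooth approximations of the value function -/

section smoothLevels

open scoped ContDiff

lemma exists_antitone_pos_of_closedBall {E : Type*} [SeminormedAddCommGroup E]
    {P : E → ℝ → Prop} (hmono : ∀ {ξ d d'}, d' ≤ d → P ξ d → P ξ d')
    (hP : ∀ R : ℝ, ∃ d, 0 < d ∧ ∀ ξ, ‖ξ‖ ≤ R → P ξ d) :
    ∃ δ : ℝ → ℝ, Antitone δ ∧ (∀ r, 0 < δ r) ∧ ∀ ξ, P ξ (δ ‖ξ‖) := by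
  choose d hd hPd using fun k : ℕ => hP k
  set g : ℕ → ℝ := fun k => ∏ i ∈ Finset.range (k + 1), min 1 (d i)
  have hpos : ∀ k, 0 < g k := fun k => Finset.prod_pos fun i _ => lt_min one_pos (hd i)
  have hsucc : ∀ k, g (k + 1) = g k * min 1 (d (k + 1)) := fun k => Finset.prod_range_succ _ _
  have hanti : Antitone g := antitone_nat_of_succ_le fun k =>
    (hsucc k).trans_le (mul_le_of_le_one_right (hpos k).le (min_le_left _ _))
  have hgd : ∀ k, g k ≤ d k := fun k => by
    refine (Finset.prod_range_succ _ _).trans_le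
      ((mul_le_of_le_one_left (lt_min one_pos (hd k)).le ?_).trans (min_le_right _ _))
    exact Finset.prod_le_one (fun i _ => (lt_min one_pos (hd i)).le) fun i _ => min_le_left _ _
  exact ⟨fun r => g ⌈r⌉₊, fun a b hab => hanti (Nat.ceil_mono hab), fun r => hpos _,
    fun ξ => hmono (hgd _) (hPd _ ξ (Nat.le_ceil _))⟩

/-- A smooth approximation of the positive part with accuracy `r`. -/
def smoothPosPart (r v : ℝ) : ℝ := v * Real.smoothTransition (v / r)

lemma smoothPosPart_of_nonpos {r v : ℝ} (hr : 0 < r) (hv : v ≤ 0) : smoothPosPart r v = 0 := by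
  rw [smoothPosPart, Real.smoothTransition.zero_of_nonpos (div_nonpos_of_nonpos_of_nonneg hv hr.le),
    mul_zero]

lemma smoothPosPart_nonneg {r : ℝ} (hr : 0 < r) (v : ℝ) : 0 ≤ smoothPosPart r v := by
  rcases le_total v 0 with hv | hv
  · rw [smoothPosPart_of_nonpos hr hv]
  · exact mul_nonneg hv (Real.smoothTransition.nonneg _)

lemma pos_of_smoothPosPart_pos {r v : ℝ} (hr : 0 < r) (hpos : 0 < smoothPosPart r v) : 0 < v := by
  contrapose! hpos
  exact (smoothPosPart_of_nonpos hr hpos).le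

lemma smoothPosPart_le_max {r : ℝ} (hr : 0 < r) (v : ℝ) : smoothPosPart r v ≤ max v 0 := by
  rcases le_total v 0 with hv | hv
  · exact (smoothPosPart_of_nonpos hr hv).trans_le (le_max_right _ _)
  · exact (mul_le_of_le_one_right hv (Real.smoothTransition.le_one _)).trans (le_max_left _ _)

lemma sub_le_smoothPosPart {r : ℝ} (hr : 0 < r) (v : ℝ) : v - r ≤ smoothPosPart r v := by
  rcases le_total v r with hv | hv
  · linarith [smoothPosPart_nonneg hr v]
  · rw [smoothPosPart, Real.smoothTransition.one_of_one_le ((one_le_div hr).2 hv)]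
    linarith

lemma contDiff_smoothPosPart (r : ℝ) : ContDiff ℝ ∞ (smoothPosPart r) :=
  contDiff_id.mul (Real.smoothTransition.contDiff.comp (contDiff_id.div_const r))

lemma deriv_smoothPosPart_pos {r v : ℝ} (hr : 0 < r) (hv : 0 < v) :
    0 < deriv (smoothPosPart r) v := by
  have htransition : HasDerivAt (fun v => Real.smoothTransition (v / r))
      (deriv Real.smoothTransition (v / r) * (1 / r)) v :=
    HasDerivAt.comp (h₂ := Real.smoothTransition) v
      ((Real.smoothTransition.contDiff (n := 1)).differentiable one_ne_zero (v / r)).hasDerivAt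
      ((hasDerivAt_id' v).div_const r)
  have hderiv : HasDerivAt (smoothPosPart r) _ v := (hasDerivAt_id v).mul htransition
  have hvalue := Real.smoothTransition.pos_of_pos (div_pos hv hr)
  have hslope : 0 ≤ deriv Real.smoothTransition (v / r) :=
    Real.smoothTransition.monotone.deriv_nonneg
  rw [hderiv.deriv]
  simp only [id]
  positivity

lemma fderiv_smoothPosPart_comp_neg {E : Type*} [NormedAddCommGroup E] [NormedSpace ℝ E]
    {W : E → ℝ} {ξ v : E} {r : ℝ} (hr : 0 < r) (hW : DifferentiableAt ℝ W ξ) (hpos : 0 < W ξ)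
    (hneg : fderiv ℝ W ξ v < 0) : fderiv ℝ (fun η => smoothPosPart r (W η)) ξ v < 0 := by
  have hderiv := ((contDiff_smoothPosPart r).differentiable (by simp)
    (W ξ)).hasDerivAt.comp_hasFDerivAt ξ hW.hasFDerivAt
  rw [show (fun η => smoothPosPart r (W η)) = smoothPosPart r ∘ W from rfl, hderiv.fderiv]
  exact mul_neg_of_pos_of_neg (deriv_smoothPosPart_pos hr hpos) hneg

variable {n m p : ℕ}
  {f : EuclideanSpace ℝ (Fin n) → EuclideanSpace ℝ (Fin m) → EuclideanSpace ℝ (Fin n)}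
  {h : EuclideanSpace ℝ (Fin n) → EuclideanSpace ℝ (Fin p)}
  {x : ℝ → EuclideanSpace ℝ (Fin n) → (ℝ → EuclideanSpace ℝ (Fin m)) → EuclideanSpace ℝ (Fin n)}
  {β : ℝ → ℝ → ℝ} {γ σ : ℝ → ℝ}

lemma IsBIBS.exists_norm_sub_flow_le (hB : IsBIBS f x)
    (hf : LocallyLipschitz (Function.uncurry f)) (R U : ℝ) {c : ℝ} (hc : 0 < c) :
    ∃ d > 0, ∃ t₀ > 0, ∀ ξ η μ t, ‖ξ‖ ≤ R → ‖η‖ ≤ R → ‖μ‖ ≤ U → ‖η - ξ‖ ≤ d → t ∈ Ioo 0 t₀ →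
      ∀ η' ∈ Metric.closedBall (η + t • f ξ μ) (t * ‖f ξ μ‖ * d),
        ‖η' - x t η fun _ => μ‖ ≤ c * t := by
  obtain ⟨F, hF, hbound⟩ := exists_norm_le_of_continuous hf.continuous R U
  obtain ⟨L, hL, hlip⟩ := exists_norm_sub_le_of_locallyLipschitz hf R U
  obtain ⟨Q, hQ, heuler⟩ := hB.exists_euler_bound hf R U
  refine ⟨c / (2 * (F + L + 1)), by positivity, c / (2 * (Q + 1)), by positivity,
    fun ξ η μ t hξ hη hμ hηξ ht η' hη' => ?_⟩
  set d := c / (2 * (F + L + 1)) with hd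
  have hdpos : 0 < d := by positivity
  have ht0 := ht.1.le
  have hdc : (F + L) * d ≤ c / 2 := by
    have : (F + L + 1) * d = c / 2 := by rw [hd]; field_simp
    linarith
  have htc : Q * t ≤ c / 2 := by
    have := (lt_div_iff₀ (by positivity)).1 ht.2
    linarith
  have hsplit : (η' - x t η fun _ => μ) = (η' - (η + t • f ξ μ)) + t • (f ξ μ - f η μ) -
      ((x t η fun _ => μ) - (η + t • f η μ)) := by
    rw [smul_sub]
    abel
  calc ‖η' - x t η fun _ => μ‖
      ≤ ‖η' - (η + t • f ξ μ)‖ + ‖t • (f ξ μ - f η μ)‖ +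
          ‖(x t η fun _ => μ) - (η + t • f η μ)‖ := by
        rw [hsplit]
        exact (norm_sub_le _ _).trans (by gcongr; exact norm_add_le _ _)
    _ ≤ t * F * d + t * (L * d) + Q * t ^ 2 := by
        rw [norm_smul, Real.norm_of_nonneg ht0]
        gcongr
        · exact (mem_closedBall_iff_norm.1 hη').trans (by gcongr; exact hbound ξ μ hξ hμ)
        · refine (hlip ξ η μ hξ hη hμ).trans ?_
          rw [norm_sub_rev]
          gcongr
        · exact heuler η μ hη hμ t ht0
    _ = ((F + L) * d + Q * t) * t := by ring
    _ ≤ c * t := by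
        gcongr
        linarith

/-- The value function truncated from below at the level `r`, which makes it locally Lipschitz. -/
def truncatedValue (h : EuclideanSpace ℝ (Fin n) → EuclideanSpace ℝ (Fin p))
    (x : ℝ → EuclideanSpace ℝ (Fin n) → (ℝ → EuclideanSpace ℝ (Fin m)) → EuclideanSpace ℝ (Fin n))
    (γ : ℝ → ℝ) (r : ℝ) (ξ : EuclideanSpace ℝ (Fin n)) : ℝ :=
  max (outputValue h x γ ξ) r

/-- `d` is a radius at which the truncated value function may be mollified near `ξ`: it oscillates
little on the ball of radius `d`, and it decreases at a positive rate along Euler steps from that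
ball whose velocity `f ξ μ` is frozen at `ξ` up to a relative error `d`. -/
structure IsSmoothingRadius
    (f : EuclideanSpace ℝ (Fin n) → EuclideanSpace ℝ (Fin m) → EuclideanSpace ℝ (Fin n))
    (h : EuclideanSpace ℝ (Fin n) → EuclideanSpace ℝ (Fin p))
    (x : ℝ → EuclideanSpace ℝ (Fin n) → (ℝ → EuclideanSpace ℝ (Fin m)) → EuclideanSpace ℝ (Fin n))
    (γ : ℝ → ℝ) (r : ℝ) (ξ : EuclideanSpace ℝ (Fin n)) (d : ℝ) : Prop where
  abs_sub_le : ∀ η ∈ Metric.closedBall ξ d,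
    |truncatedValue h x γ r η - truncatedValue h x γ r ξ| ≤ r / 4
  exists_decrease : ∀ μ, 6 * γ ‖μ‖ ≤ outputValue h x γ ξ → 7 / 4 * r < outputValue h x γ ξ →
    ∃ c > 0, ∃ t₀ > 0, ∀ η ∈ Metric.closedBall ξ d, ∀ t ∈ Ioo 0 t₀,
      ∀ η' ∈ Metric.closedBall (η + t • f ξ μ) (t * ‖f ξ μ‖ * d),
        truncatedValue h x γ r η' ≤ truncatedValue h x γ r η - c * t

lemma IsSmoothingRadius.anti {r d d' : ℝ} {ξ : EuclideanSpace ℝ (Fin n)} (hd : d' ≤ d)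
    (hr : IsSmoothingRadius f h x γ r ξ d) : IsSmoothingRadius f h x γ r ξ d' := by
  have hball : Metric.closedBall ξ d' ⊆ Metric.closedBall ξ d :=
    Metric.closedBall_subset_closedBall hd
  refine ⟨fun η hη => hr.abs_sub_le η (hball hη), fun μ hμ hrξ => ?_⟩
  obtain ⟨c, hc, t₀, ht₀, hstep⟩ := hr.exists_decrease μ hμ hrξ
  refine ⟨c, hc, t₀, ht₀, fun η hη t ht η' hη' => hstep η (hball hη) t ht η'
    (Metric.closedBall_subset_closedBall ?_ hη')⟩
  have := ht.1.le
  gcongr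

namespace IsOutputDecay

lemma exists_lipschitzOnWith_truncatedValue (hD : IsOutputDecay h x β γ σ) (hB : IsBIBS f x)
    (hf : LocallyLipschitz (Function.uncurry f)) (hh : LocallyLipschitz h) (hh0 : h 0 = 0)
    (R : ℝ) {r : ℝ} (hr : 0 < r) :
    ∃ C : ℝ≥0, LipschitzOnWith C (truncatedValue h x γ r) (Metric.closedBall 0 R) := by
  obtain ⟨C, hC, hlip⟩ := hD.exists_lipschitz hB hf hh hh0 R hr
  lift C to ℝ≥0 using hC
  refine ⟨C, LipschitzOnWith.of_le_add_mul C fun ξ hξ ξ' hξ' => ?_⟩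
  rw [mem_closedBall_zero_iff] at hξ hξ'
  rw [dist_eq_norm]
  have hdist : 0 ≤ C * ‖ξ - ξ'‖ := by positivity
  rcases le_total (outputValue h x γ ξ) r with hle | hle
  · rw [truncatedValue, max_eq_right hle]
    exact le_add_of_le_of_nonneg (le_max_right _ _) hdist
  · rw [truncatedValue, max_eq_left hle]
    exact (hlip ξ ξ' hξ hξ' hle).trans (by gcongr; exact le_max_left _ _)

lemma continuous_truncatedValue (hD : IsOutputDecay h x β γ σ) (hB : IsBIBS f x)
    (hf : LocallyLipschitz (Function.uncurry f)) (hh : LocallyLipschitz h) (hh0 : h 0 = 0)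
    {r : ℝ} (hr : 0 < r) : Continuous (truncatedValue h x γ r) := by
  refine continuous_iff_continuousAt.2 fun ξ => ?_
  obtain ⟨C, hC⟩ := hD.exists_lipschitzOnWith_truncatedValue hB hf hh hh0 (‖ξ‖ + 1) hr
  refine hC.continuousOn.continuousAt (mem_of_superset (Metric.closedBall_mem_nhds ξ one_pos)
    (Metric.closedBall_subset_closedBall' ?_))
  rw [dist_zero_right, add_comm]

lemma exists_oscillation_radius (hD : IsOutputDecay h x β γ σ) (hB : IsBIBS f x)
    (hf : LocallyLipschitz (Function.uncurry f)) (hh : LocallyLipschitz h) (hh0 : h 0 = 0)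
    (R : ℝ) {r ε : ℝ} (hr : 0 < r) (hε : 0 < ε) :
    ∃ d > 0, ∀ ξ, ‖ξ‖ ≤ R → ∀ η ∈ Metric.closedBall ξ d,
      |truncatedValue h x γ r η - truncatedValue h x γ r ξ| ≤ ε := by
  obtain ⟨C, hC⟩ := hD.exists_lipschitzOnWith_truncatedValue hB hf hh hh0 (R + 1) hr
  refine ⟨min 1 (ε / (C + 1)), by positivity, fun ξ hξ η hη => ?_⟩
  rw [mem_closedBall_iff_norm, le_min_iff, le_div_iff₀ (by positivity)] at hη
  have hηR : ‖η‖ ≤ R + 1 := by linarith [norm_le_norm_add_norm_sub ξ η, norm_sub_rev ξ η]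
  have hlip := hC.norm_sub_le (mem_closedBall_zero_iff.2 hηR)
    (mem_closedBall_zero_iff.2 (hξ.trans (by linarith)))
  exact hlip.trans (by linarith [norm_nonneg (η - ξ)])

lemma exists_truncatedValue_flow_le (hD : IsOutputDecay h x β γ σ) (hB : IsBIBS f x)
    (hf : LocallyLipschitz (Function.uncurry f)) (hh : Continuous h) (hh0 : h 0 = 0) (R U : ℝ)
    {r : ℝ} (hr : 0 < r) :
    ∃ c > 0, ∃ t₀ > 0, ∀ η μ, ‖η‖ ≤ R → ‖μ‖ ≤ U → 3 / 2 * r ≤ outputValue h x γ η →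
      5 * γ ‖μ‖ ≤ outputValue h x γ η → ∀ t ∈ Ioo 0 t₀,
        truncatedValue h x γ r (x t η fun _ => μ) ≤ truncatedValue h x γ r η - c * t := by
  obtain ⟨c, hc, hdec⟩ := hD.exists_decrease hB hf hh hh0 R U hr
  refine ⟨c, hc, min 1 (r / (2 * c)), by positivity, fun η μ hη hμ hrη hμη t ht => ?_⟩
  obtain ⟨ht1, htr⟩ := lt_min_iff.1 ht.2
  rw [lt_div_iff₀ (by positivity)] at htr
  rw [truncatedValue, truncatedValue, max_eq_left (by linarith : r ≤ outputValue h x γ η)]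
  exact max_le (hdec η μ hη hμ (by linarith) hμη t ⟨ht.1.le, ht1.le⟩) (by linarith)

lemma exists_truncatedValue_le_sub (hD : IsOutputDecay h x β γ σ) (hB : IsBIBS f x)
    (hf : LocallyLipschitz (Function.uncurry f)) (hh : LocallyLipschitz h) (hh0 : h 0 = 0)
    (R U : ℝ) {r : ℝ} (hr : 0 < r) :
    ∃ d > 0, ∃ c > 0, ∃ t₀ > 0, ∀ ξ η μ t, ‖ξ‖ ≤ R → ‖η‖ ≤ R → ‖μ‖ ≤ U → ‖η - ξ‖ ≤ d →
      3 / 2 * r ≤ outputValue h x γ η → 5 * γ ‖μ‖ ≤ outputValue h x γ η → t ∈ Ioo 0 t₀ →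
      ∀ η' ∈ Metric.closedBall (η + t • f ξ μ) (t * ‖f ξ μ‖ * d),
        truncatedValue h x γ r η' ≤ truncatedValue h x γ r η - c * t := by
  obtain ⟨c, hc, t₁, ht₁, hflow⟩ := hD.exists_truncatedValue_flow_le hB hf hh.continuous hh0 R U hr
  obtain ⟨R', -, hR'⟩ := hB.exists_bound R U
  obtain ⟨C, hC⟩ := hD.exists_lipschitzOnWith_truncatedValue hB hf hh hh0 (R' + 1) hr
  obtain ⟨d, hd, t₂, ht₂, hdist⟩ := hB.exists_norm_sub_flow_le hf R U
    (by positivity : 0 < c / (2 * (C + 1)))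
  refine ⟨d, hd, c / 2, half_pos hc, min t₁ (min t₂ (2 / c)), by positivity,
    fun ξ η μ t hξ hη hμ hηξ hrη hμη ht η' hη' => ?_⟩
  obtain ⟨htt₁, htt₂, htc⟩ := by simpa only [lt_min_iff] using ht.2
  rw [lt_div_iff₀ hc] at htc
  have hη'dist := hdist ξ η μ t hξ hη hμ hηξ ⟨ht.1, htt₂⟩ η' hη'
  rw [div_mul_eq_mul_div, le_div_iff₀ (by positivity)] at hη'dist
  have hxR' : ‖x t η fun _ => μ‖ ≤ R' :=
    hR' η _ (isEssBddInput_const μ) hη ((uNorm_const_le μ).trans hμ) t ht.1.le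
  have hClip : C * ‖η' - x t η fun _ => μ‖ ≤ c / 2 * t := by
    linarith [norm_nonneg (η' - x t η fun _ => μ)]
  have hη'R' : ‖η'‖ ≤ R' + 1 := by
    have : 0 ≤ C * ‖η' - x t η fun _ => μ‖ := by positivity
    linarith [norm_le_norm_add_norm_sub (x t η fun _ => μ) η',
      norm_sub_rev (x t η fun _ => μ) η']
  have hlip := (le_abs_self _).trans (hC.norm_sub_le (mem_closedBall_zero_iff.2 hη'R')
    (mem_closedBall_zero_iff.2 (hxR'.trans (by linarith))))
  linarith [hflow η μ hη hμ hrη hμη t ⟨ht.1, htt₁⟩]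

lemma outputValue_le_overshoot (hD : IsOutputDecay h x β γ σ) (ξ : EuclideanSpace ℝ (Fin n)) :
    outputValue h x γ ξ ≤ 2 * σ ‖h ξ‖ :=
  outputValue_le fun _ _ ht hu => hD.weightedExcess_le ξ ht hu

lemma exists_norm_le_of_gain_le (hD : IsOutputDecay h x β γ σ) (hh : Continuous h)
    (hh0 : h 0 = 0) (R : ℝ) :
    ∃ U, ∀ ξ (μ : EuclideanSpace ℝ (Fin m)), ‖ξ‖ ≤ R → γ ‖μ‖ ≤ outputValue h x γ ξ → ‖μ‖ ≤ U := by
  obtain ⟨κ, hκ, hκh⟩ := exists_isClassK_norm_bound hh hh0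
  obtain ⟨U, hU⟩ := hD.gain.exists_le_of_le (2 * σ (κ |R|))
  refine ⟨U, fun ξ μ hξ hμ => hU _ (hμ.trans ((hD.outputValue_le_overshoot ξ).trans ?_))⟩
  have hmono := hD.overshoot.mono (norm_nonneg _) ((hκh ξ).trans
    (hκ.mono (norm_nonneg _) (hξ.trans (le_abs_self R))))
  linarith

lemma exists_isSmoothingRadius (hD : IsOutputDecay h x β γ σ) (hB : IsBIBS f x)
    (hf : LocallyLipschitz (Function.uncurry f)) (hh : LocallyLipschitz h) (hh0 : h 0 = 0)
    (R : ℝ) {r : ℝ} (hr : 0 < r) :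
    ∃ d > 0, ∀ ξ, ‖ξ‖ ≤ R → IsSmoothingRadius f h x γ r ξ d := by
  obtain ⟨U, hU⟩ := hD.exists_norm_le_of_gain_le (m := m) hh.continuous hh0 R
  obtain ⟨d₁, hd₁, hosc⟩ := hD.exists_oscillation_radius hB hf hh hh0 R hr
    (by positivity : 0 < r / 4)
  obtain ⟨d₂, hd₂, c, hc, t₀, ht₀, hdec⟩ :=
    hD.exists_truncatedValue_le_sub hB hf hh hh0 (R + 1) U hr
  refine ⟨min 1 (min d₁ d₂), by positivity, fun ξ hξ => ⟨fun η hη => hosc ξ hξ η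
    (Metric.closedBall_subset_closedBall ((min_le_right _ _).trans (min_le_left _ _)) hη),
    fun μ hμ hrξ => ⟨c, hc, t₀, ht₀, fun η hη t ht η' hη' => ?_⟩⟩⟩
  have hηball := mem_closedBall_iff_norm.1 hη
  obtain ⟨hη1, hηd₁, hηd₂⟩ := by simpa only [le_min_iff] using hηball
  have := hD.gain.1.nonneg (norm_nonneg μ)
  have hoscη := (abs_le.1 (hosc ξ hξ η (mem_closedBall_iff_norm.2 hηd₁))).1
  rw [truncatedValue, truncatedValue, max_eq_left (by linarith : r ≤ outputValue h x γ ξ)] at hoscη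
  have hvalue : outputValue h x γ ξ - r / 4 ≤ outputValue h x γ η := by
    have hmax : outputValue h x γ ξ - r / 4 ≤ max (outputValue h x γ η) r := by linarith
    rcases le_max_iff.1 hmax with hle | hle <;> linarith
  have hηR : ‖η‖ ≤ R + 1 := (norm_le_norm_add_norm_sub' η ξ).trans (add_le_add hξ hη1)
  refine hdec ξ η μ t (by linarith) hηR (hU ξ μ hξ (by linarith)) hηd₂ (by linarith)
    (by linarith) ht η' ?_
  refine Metric.closedBall_subset_closedBall ?_ hη'
  have := ht.1.le
  gcongr
  exact (min_le_right _ _).trans (min_le_right _ _)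

lemma exists_smooth_truncatedValue (hD : IsOutputDecay h x β γ σ) (hB : IsBIBS f x)
    (hf : LocallyLipschitz (Function.uncurry f)) (hh : LocallyLipschitz h) (hh0 : h 0 = 0)
    {r : ℝ} (hr : 0 < r) :
    ∃ W : EuclideanSpace ℝ (Fin n) → ℝ, ContDiff ℝ ∞ W ∧
      (∀ ξ, |W ξ - truncatedValue h x γ r ξ| ≤ r / 4) ∧
      ∀ ξ μ, 6 * γ ‖μ‖ ≤ outputValue h x γ ξ → 7 / 4 * r < outputValue h x γ ξ →
        fderiv ℝ W ξ (f ξ μ) < 0 := by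
  obtain ⟨δ, hδ, hδpos, hδr⟩ := exists_antitone_pos_of_closedBall
    (P := IsSmoothingRadius f h x γ r) IsSmoothingRadius.anti fun R =>
      hD.exists_isSmoothingRadius hB hf hh hh0 R hr
  obtain ⟨W, hW, hWle, hleW, hfderiv⟩ := exists_smooth_approx
    (hD.continuous_truncatedValue hB hf hh hh0 hr) hδ hδpos
  refine ⟨W, hW, fun ξ => abs_le.2 ⟨?_, ?_⟩, fun ξ μ hμ hrξ => ?_⟩
  · exact neg_le_sub_iff_le_add.2 (sub_le_iff_le_add.1 (hleW ξ _ fun η hη => by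
      linarith [(abs_le.1 ((hδr ξ).abs_sub_le η hη)).1]))
  · exact sub_le_iff_le_add'.2 (hWle ξ _ fun η hη => by
      linarith [(abs_le.1 ((hδr ξ).abs_sub_le η hη)).2])
  · obtain ⟨c, hc, t₀, ht₀, hstep⟩ := (hδr ξ).exists_decrease μ hμ hrξ
    exact (hfderiv ξ (f ξ μ) c t₀ ht₀ hstep).trans_lt (neg_neg_iff_pos.2 hc)

lemma exists_smooth_level (hD : IsOutputDecay h x β γ σ) (hB : IsBIBS f x)
    (hf : LocallyLipschitz (Function.uncurry f)) (hh : LocallyLipschitz h) (hh0 : h 0 = 0)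
    {r : ℝ} (hr : 0 < r) :
    ∃ V : EuclideanSpace ℝ (Fin n) → ℝ, ContDiff ℝ ∞ V ∧ (∀ ξ, 0 ≤ V ξ) ∧
      (∀ ξ, V ξ ≤ outputValue h x γ ξ) ∧ (∀ ξ, outputValue h x γ ξ - 4 * r ≤ V ξ) ∧
      ∀ ξ μ, 0 < V ξ → 6 * γ ‖μ‖ ≤ outputValue h x γ ξ → fderiv ℝ V ξ (f ξ μ) < 0 := by
  obtain ⟨W, hW, happrox, hfderiv⟩ := hD.exists_smooth_truncatedValue hB hf hh hh0 hr
  have hupper : ∀ ξ, W ξ ≤ truncatedValue h x γ r ξ + r / 4 := fun ξ => by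
    linarith [(abs_le.1 (happrox ξ)).2]
  have hlower : ∀ ξ, outputValue h x γ ξ - r / 4 ≤ W ξ := fun ξ => by
    have hle : outputValue h x γ ξ ≤ truncatedValue h x γ r ξ := le_max_left _ _
    linarith [(abs_le.1 (happrox ξ)).1]
  have hvalue : ∀ ξ, 0 ≤ outputValue h x γ ξ := fun ξ =>
    (norm_nonneg _).trans (hD.norm_le_outputValue hB ξ)
  have hlarge : ∀ ξ, 0 < W ξ - 2 * r → 7 / 4 * r < outputValue h x γ ξ ∧
      truncatedValue h x γ r ξ = outputValue h x γ ξ := fun ξ hξ => by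
    rcases max_cases (outputValue h x γ ξ) r with ⟨heq, -⟩ | ⟨heq, -⟩ <;>
      rw [← truncatedValue] at heq
    · exact ⟨by linarith [hupper ξ], heq⟩
    · linarith [hupper ξ]
  refine ⟨fun ξ => smoothPosPart r (W ξ - 2 * r),
    (contDiff_smoothPosPart r).comp (hW.sub contDiff_const), fun ξ => smoothPosPart_nonneg hr _,
    fun ξ => (smoothPosPart_le_max hr _).trans (max_le ?_ (hvalue ξ)), fun ξ => ?_,
    fun ξ μ hpos hμ => ?_⟩
  · by_contra! hlt
    obtain ⟨-, heq⟩ := hlarge ξ ((hvalue ξ).trans_lt hlt)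
    linarith [hupper ξ]
  · linarith [sub_le_smoothPosPart hr (W ξ - 2 * r), hlower ξ]
  · have hWpos := pos_of_smoothPosPart_pos hr hpos
    have hWdiff : DifferentiableAt ℝ W ξ := hW.differentiable (by simp) ξ
    refine fderiv_smoothPosPart_comp_neg hr (hWdiff.sub_const _) hWpos ?_
    rw [fderiv_sub_const]
    exact hfderiv ξ μ hμ (hlarge ξ hWpos).1

end IsOutputDecay

end smoothLevels

section smoothSeries

/-! ### Smooth series -/

open scoped ContDiff

variable {E : Type*} [NormedAddCommGroup E] [InnerProductSpace ℝ E] [FiniteDimensional ℝ E]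

/-- A smooth cutoff which equals `1` on the closed ball of radius `j + 1`. -/
def ballCutoff (E : Type*) [NormedAddCommGroup E] [InnerProductSpace ℝ E] [FiniteDimensional ℝ E]
    (j : ℕ) : ContDiffBump (0 : E) :=
  ⟨j + 1, j + 2, by positivity, by linarith⟩

lemma ballCutoff_eventuallyEq_one {j : ℕ} {ξ : E} (hξ : ‖ξ‖ ≤ j) : ballCutoff E j =ᶠ[𝓝 ξ] 1 :=
  (ballCutoff E j).eventuallyEq_one_of_mem_ball
    (mem_ball_zero_iff.2 (hξ.trans_lt (lt_add_one (j : ℝ))))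

lemma exists_bound_iteratedFDeriv_mul_ballCutoff {g : E → ℝ} (hg : ContDiff ℝ ∞ g) (i j : ℕ) :
    ∃ C, ∀ ξ, ‖iteratedFDeriv ℝ i (fun ξ => g ξ * ballCutoff E j ξ) ξ‖ ≤ C := by
  have hcompact : HasCompactSupport fun ξ => g ξ * ballCutoff E j ξ :=
    (ballCutoff E j).hasCompactSupport.mul_left
  exact (hcompact.iteratedFDeriv (𝕜 := ℝ) i).exists_bound_of_continuous
    ((hg.mul (ballCutoff E j).contDiff).continuous_iteratedFDeriv (mod_cast le_top))

lemma norm_fderiv_eq_norm_iteratedFDeriv_mul_ballCutoff (g : E → ℝ) {j : ℕ} {ξ : E}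
    (hξ : ‖ξ‖ ≤ j) :
    ‖fderiv ℝ g ξ‖ = ‖iteratedFDeriv ℝ 1 (fun ξ => g ξ * ballCutoff E j ξ) ξ‖ := by
  have heq : (fun ξ => g ξ * ballCutoff E j ξ) =ᶠ[𝓝 ξ] g := by
    filter_upwards [ballCutoff_eventuallyEq_one hξ] with η hη
    rw [hη, Pi.one_apply, mul_one]
  rw [norm_iteratedFDeriv_one, heq.fderiv_eq]

lemma contDiff_tsum_of_ballCutoff {g : ℕ → E → ℝ} (hg : ∀ k, ContDiff ℝ ∞ (g k)) {u : ℕ → ℝ}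
    (hu : Summable u) (hgu : ∀ i j : ℕ, ∀ᶠ k in atTop, ∀ ξ,
      ‖iteratedFDeriv ℝ i (fun ξ => g k ξ * ballCutoff E j ξ) ξ‖ ≤ u k) :
    ContDiff ℝ ∞ fun ξ => ∑' k, g k ξ := by
  refine contDiff_iff_contDiffAt.2 fun ξ => ?_
  obtain ⟨j, hj⟩ := exists_nat_ge ‖ξ‖
  have hsmooth : ContDiff ℝ ∞ fun ξ => ∑' k, g k ξ * ballCutoff E j ξ :=
    contDiff_tsum_of_eventually (v := fun _ => u)
      (fun k => (hg k).mul (ballCutoff E j).contDiff) (fun _ _ => hu) fun i _ =>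
        Nat.cofinite_eq_atTop ▸ hgu i j
  refine hsmooth.contDiffAt.congr_of_eventuallyEq ?_
  filter_upwards [ballCutoff_eventuallyEq_one hj] with η hη
  simp only [hη, Pi.one_apply, mul_one]

lemma hasSum_fderiv_apply_of_ballCutoff {g : ℕ → E → ℝ} (hg : ∀ k, ContDiff ℝ ∞ (g k))
    {u : ℕ → ℝ} (hu : Summable u) (hgu : ∀ j : ℕ, ∀ᶠ k in atTop, ∀ ξ,
      ‖iteratedFDeriv ℝ 1 (fun ξ => g k ξ * ballCutoff E j ξ) ξ‖ ≤ u k)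
    (hsum : ∀ ξ, Summable fun k => g k ξ) (ξ v : E) :
    HasSum (fun k => fderiv ℝ (g k) ξ v) (fderiv ℝ (fun ξ => ∑' k, g k ξ) ξ v) := by
  obtain ⟨j, hj⟩ := exists_nat_gt ‖ξ‖
  choose C hC using fun k => exists_bound_iteratedFDeriv_mul_ballCutoff (hg k) 1 j
  classical
  set u' : ℕ → ℝ := fun k => if ∀ ξ, ‖iteratedFDeriv ℝ 1
    (fun ξ => g k ξ * ballCutoff E j ξ) ξ‖ ≤ u k then u k else C k with hu'
  have hu'sum : Summable u' := by
    refine hu.congr_cofinite ?_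
    rw [Nat.cofinite_eq_atTop]
    filter_upwards [hgu j] with k hk
    exact (if_pos hk).symm
  have hbound : ∀ k, ∀ η ∈ Metric.ball (0 : E) j, ‖fderiv ℝ (g k) η‖ ≤ u' k := fun k η hη => by
    rw [norm_fderiv_eq_norm_iteratedFDeriv_mul_ballCutoff _ (mem_ball_zero_iff.1 hη).le]
    simp only [hu']
    split_ifs with hk
    exacts [hk η, hC k η]
  have hmem : ξ ∈ Metric.ball (0 : E) j := mem_ball_zero_iff.2 hj
  have hderiv := hasFDerivAt_tsum_of_isPreconnected hu'sum Metric.isOpen_ball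
    (convex_ball (0 : E) (j : ℝ)).isPreconnected
    (fun k η _ => ((hg k).differentiable (by simp) η).hasFDerivAt) hbound hmem (hsum ξ) hmem
  rw [hderiv.fderiv]
  exact (hu'sum.of_norm_bounded fun k => hbound k ξ hmem).hasSum.mapL
    (ContinuousLinearMap.apply ℝ ℝ v)

lemma exists_pos_le_half_pow_mul_le (C : ℕ → ℕ → ℕ → ℝ) :
    ∃ c : ℕ → ℝ, (∀ k, 0 < c k) ∧ (∀ k, c k ≤ (1 / 2) ^ k) ∧
      ∀ k i j, i ≤ k → j ≤ k → c k * C k i j ≤ (1 / 2) ^ k := by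
  set M : ℕ → ℝ := fun k => ∑ i ∈ Finset.range (k + 1), ∑ j ∈ Finset.range (k + 1), |C k i j|
  have hM : ∀ k, 0 ≤ M k := fun k => Finset.sum_nonneg fun _ _ =>
    Finset.sum_nonneg fun _ _ => abs_nonneg _
  have hCM : ∀ k i j, i ≤ k → j ≤ k → C k i j ≤ M k := fun k i j hi hj =>
    calc C k i j ≤ |C k i j| := le_abs_self _
      _ ≤ ∑ j ∈ Finset.range (k + 1), |C k i j| :=
        Finset.single_le_sum (f := fun j => |C k i j|) (fun _ _ => abs_nonneg _)
          (Finset.mem_range_succ_iff.2 hj)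
      _ ≤ M k := Finset.single_le_sum (f := fun i => ∑ j ∈ Finset.range (k + 1), |C k i j|)
          (fun _ _ => Finset.sum_nonneg fun _ _ => abs_nonneg _) (Finset.mem_range_succ_iff.2 hi)
  have hpos : ∀ k, 0 < 1 + M k := fun k => by linarith [hM k]
  refine ⟨fun k => (1 / 2) ^ k / (1 + M k), fun k => div_pos (by positivity) (hpos k),
    fun k => div_le_self (by positivity) (by linarith [hM k]), fun k i j hi hj => ?_⟩
  rw [div_mul_eq_mul_div, div_le_iff₀ (hpos k)]
  exact mul_le_mul_of_nonneg_left (by linarith [hCM k i j hi hj]) (by positivity)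

lemma exists_smooth_series {W : ℕ → E → ℝ} (hW : ∀ k, ContDiff ℝ ∞ (W k)) {B : E → ℝ}
    (hWB : ∀ k ξ, |W k ξ| ≤ B ξ) :
    ∃ c : ℕ → ℝ, (∀ k, 0 < c k) ∧ (∀ k, c k ≤ (1 / 2) ^ k) ∧
      (∀ ξ, Summable fun k => c k * W k ξ) ∧ (ContDiff ℝ ∞ fun ξ => ∑' k, c k * W k ξ) ∧
      ∀ ξ v, HasSum (fun k => c k * fderiv ℝ (W k) ξ v)
        (fderiv ℝ (fun ξ => ∑' k, c k * W k ξ) ξ v) := by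
  choose C hC using fun k i j => exists_bound_iteratedFDeriv_mul_ballCutoff (hW k) i j
  obtain ⟨c, hcpos, hcle, hcC⟩ := exists_pos_le_half_pow_mul_le C
  have hsmooth : ∀ k, ContDiff ℝ ∞ fun ξ => c k * W k ξ := fun k => contDiff_const.mul (hW k)
  have hbound : ∀ i j : ℕ, ∀ᶠ k in atTop, ∀ ξ,
      ‖iteratedFDeriv ℝ i (fun ξ => c k * W k ξ * ballCutoff E j ξ) ξ‖ ≤ (1 / 2 : ℝ) ^ k := by
    intro i j
    filter_upwards [eventually_ge_atTop (max i j)] with k hk ξ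
    have hmul : ContDiff ℝ i fun ξ => W k ξ * ballCutoff E j ξ :=
      ((hW k).mul (ballCutoff E j).contDiff).of_le (mod_cast le_top)
    have hsmul : (fun ξ => c k * W k ξ * ballCutoff E j ξ) =
        fun ξ => c k • (W k ξ * ballCutoff E j ξ) := funext fun _ => mul_assoc _ _ _
    rw [hsmul, iteratedFDeriv_const_smul_apply' hmul.contDiffAt, norm_smul,
      Real.norm_of_nonneg (hcpos k).le]
    exact (mul_le_mul_of_nonneg_left (hC k i j ξ) (hcpos k).le).trans
      (hcC k i j (le_of_max_le_left hk) (le_of_max_le_right hk))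
  have hsum : ∀ ξ, Summable fun k => c k * W k ξ := fun ξ =>
    (summable_geometric_two.mul_right (B ξ)).of_norm_bounded fun k => by
      rw [norm_mul, Real.norm_of_nonneg (hcpos k).le]
      exact mul_le_mul (hcle k) (hWB k ξ) (norm_nonneg _) (by positivity)
  refine ⟨c, hcpos, hcle, hsum, contDiff_tsum_of_ballCutoff hsmooth summable_geometric_two hbound,
    fun ξ v => ?_⟩
  convert hasSum_fderiv_apply_of_ballCutoff hsmooth summable_geometric_two (hbound 1) hsum ξ v
    using 2 with k
  rw [fderiv_const_mul ((hW k).differentiable (by simp) ξ)]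
  rfl

end smoothSeries

section decayRate

/-! ### Decay rates -/

lemma isClassK_div_one_add : IsClassK fun s => s / (1 + s) := by
  refine ⟨continuousOn_id.div (by fun_prop) fun s hs => ?_, fun s hs t ht hst => ?_, zero_div _⟩
  · linarith [mem_Ici.1 hs]
  · simp only
    rw [div_lt_div_iff₀ (by linarith [mem_Ici.1 hs]) (by linarith [mem_Ici.1 ht])]
    linarith

lemma IsClassK.mul_of_monotoneOn {κ g : ℝ → ℝ} (hκ : IsClassK κ) (hg : MonotoneOn g (Ici 0))
    (hcont : ContinuousOn g (Ioi 0)) (hpos : ∀ s, 0 < s → 0 < g s) :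
    IsClassK fun s => κ s * g s := by
  have hsmall : ∀ s ∈ Icc (0 : ℝ) 1, ‖κ s * g s‖ ≤ κ s * g 1 := fun s hs => by
    rcases hs.1.eq_or_lt with rfl | hs0
    · simp [hκ.2.2]
    · rw [Real.norm_of_nonneg (mul_nonneg (hκ.nonneg hs.1) (hpos s hs0).le)]
      exact mul_le_mul_of_nonneg_left (hg hs.1 (mem_Ici.2 zero_le_one) hs.2) (hκ.nonneg hs.1)
  refine ⟨fun s hs => ?_, fun s hs t ht hst => ?_, by simp [hκ.2.2]⟩
  · rcases (mem_Ici.1 hs).eq_or_lt with rfl | hs0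
    · rw [ContinuousWithinAt, hκ.2.2, zero_mul]
      refine squeeze_zero_norm' (a := fun s => κ s * g 1) ?_ ?_
      · filter_upwards [Icc_mem_nhdsGE zero_lt_one] with s hs using hsmall s hs
      · simpa only [zero_mul] using hκ.tendsto_zero.mul_const (g 1)
    · exact (hκ.1 s hs).mul
        (hcont.continuousAt (Ioi_mem_nhds hs0)).continuousWithinAt
  · have ht0 : 0 < t := (mem_Ici.1 hs).trans_lt hst
    exact (mul_le_mul_of_nonneg_left (hg hs ht hst.le) (hκ.nonneg hs)).trans_lt
      (mul_lt_mul_of_pos_right (hκ.2.1 hs ht hst) (hpos t ht0))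

lemma exists_isClassK_le_of_monotone {ψ : ℝ → ℝ → ℝ} (hmono : ∀ r, Monotone fun s => ψ s r)
    (hanti : ∀ s, Antitone (ψ s)) (hpos : ∀ r s, 0 < s → 0 < ψ s r) :
    ∃ α : ℝ → ℝ → ℝ, (∀ r, IsClassK fun s => α s r) ∧
      (∀ s, 0 ≤ s → Antitone (α s)) ∧ ∀ r s, 0 < s → α s r ≤ ψ s r := by
  set avg : ℝ → ℝ → ℝ := fun s r => dyadicAvg (fun s => ψ s r) (s / 2)
  have havgpos : ∀ r s, 0 < s → 0 < avg s r := fun r s hs =>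
    (hpos r _ (half_pos hs)).trans_le (le_dyadicAvg (hmono r) (half_pos hs).le)
  have havgle : ∀ r s, 0 < s → avg s r ≤ ψ s r := fun r s hs => by
    simpa only [div_mul_cancel₀ s two_ne_zero] using dyadicAvg_le (hmono r) (half_pos hs).le
  refine ⟨fun s r => s / (1 + s) * avg s r, fun r => isClassK_div_one_add.mul_of_monotoneOn
    (fun s hs t ht hst => ?_) ?_ (havgpos r), fun s hs r r' hr => ?_, fun r s hs => ?_⟩
  · exact monotoneOn_dyadicAvg (hmono r) (mem_Ici.2 (div_nonneg hs zero_le_two))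
      (mem_Ici.2 (div_nonneg ht zero_le_two)) (by gcongr)
  · exact (continuousOn_dyadicAvg_Ioi (hmono r)).comp (by fun_prop) fun s hs =>
      mem_Ioi.2 (half_pos hs)
  · exact mul_le_mul_of_nonneg_left
      (dyadicAvg_le_dyadicAvg (hmono r') (hmono r) (fun t => hanti t hr) (by positivity))
      (by positivity)
  · exact (mul_le_of_le_one_left (havgpos r s hs).le
      ((div_le_one (by linarith)).2 (by linarith))).trans (havgle r s hs)

lemma fderiv_eq_zero_of_nonneg {E : Type*} [NormedAddCommGroup E] [NormedSpace ℝ E] {V : E → ℝ}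
    (hV : ∀ ξ, 0 ≤ V ξ) {ξ : E} (hξ : V ξ = 0) : fderiv ℝ V ξ = 0 :=
  IsLocalMin.fderiv_eq_zero (Eventually.of_forall fun η => hξ ▸ hV η)

/-- The decay rates of `V` along `f` at states of norm at most `r` with `s ≤ V`, for inputs
admissible with respect to the threshold `χ`. The rate `1` is added so that the set is never empty,
which keeps its infimum meaningful. -/
def decayRates {E F : Type*} [NormedAddCommGroup E] [NormedSpace ℝ E] [Norm F] (f : E → F → E)
    (V : E → ℝ) (χ : ℝ → ℝ) (s r : ℝ) : Set ℝ :=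
  insert 1 ((fun q : E × F => -fderiv ℝ V q.1 (f q.1 q.2)) ''
    {q | ‖q.1‖ ≤ r ∧ s ≤ V q.1 ∧ χ ‖q.2‖ ≤ V q.1})

section decayRates

variable {E F : Type*} [NormedAddCommGroup E] [NormedSpace ℝ E]

lemma decayRates_subset [Norm F] {f : E → F → E} {V : E → ℝ} {χ : ℝ → ℝ} {s s' r r' : ℝ}
    (hs : s ≤ s') (hr : r' ≤ r) : decayRates f V χ s' r' ⊆ decayRates f V χ s r :=
  insert_subset_insert (image_mono fun _ hq => ⟨hq.1.trans hr, hs.trans hq.2.1, hq.2.2⟩)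

lemma bddBelow_decayRates [Norm F] {f : E → F → E} {V : E → ℝ} {χ : ℝ → ℝ}
    (hdec : ∀ ξ μ, χ ‖μ‖ ≤ V ξ → fderiv ℝ V ξ (f ξ μ) ≤ 0) (s r : ℝ) :
    BddBelow (decayRates f V χ s r) := by
  refine ⟨0, ?_⟩
  rintro a (rfl | ⟨q, hq, rfl⟩)
  · exact zero_le_one
  · exact neg_nonneg.2 (hdec _ _ hq.2.2)

variable [FiniteDimensional ℝ E] [NormedAddCommGroup F] [NormedSpace ℝ F]
  [FiniteDimensional ℝ F] {f : E → F → E} {V : E → ℝ} {χ : ℝ → ℝ}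

lemma isCompact_setOf_norm_le_of_gain_le (hV : Continuous V) (hχ : IsClassKInfty χ) (s r : ℝ) :
    IsCompact {q : E × F | ‖q.1‖ ≤ r ∧ s ≤ V q.1 ∧ χ ‖q.2‖ ≤ V q.1} := by
  obtain ⟨B, hB⟩ := (isCompact_closedBall (0 : E) r).exists_bound_of_continuousOn hV.continuousOn
  obtain ⟨U, hU⟩ := (hχ.2.eventually_gt_atTop B).exists_forall_of_atTop
  have hVfst : Continuous fun q : E × F => V q.1 := hV.comp continuous_fst
  have hnorm : Continuous fun q : E × F => ‖q.1‖ := by fun_prop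
  have hχsnd : Continuous fun q : E × F => χ ‖q.2‖ :=
    hχ.1.1.comp_continuous (by fun_prop) fun q => norm_nonneg _
  refine ((isCompact_closedBall (0 : E) r).prod (isCompact_closedBall (0 : F) U)).of_isClosed_subset
    ((isClosed_le hnorm continuous_const).inter
      ((isClosed_le continuous_const hVfst).inter (isClosed_le hχsnd hVfst))) fun q hq => ?_
  have hq1 := mem_closedBall_zero_iff.2 hq.1
  refine ⟨hq1, mem_closedBall_zero_iff.2 (not_lt.1 fun hlt => ?_)⟩
  linarith [hU _ hlt.le, hq.2.2, (le_abs_self _).trans (hB q.1 hq1)]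

lemma sInf_decayRates_pos (hf : Continuous (Function.uncurry f)) (hV : ContDiff ℝ 1 V)
    (hχ : IsClassKInfty χ) (hdec : ∀ ξ μ, 0 < V ξ → χ ‖μ‖ ≤ V ξ → fderiv ℝ V ξ (f ξ μ) < 0)
    {s : ℝ} (hs : 0 < s) (r : ℝ) : 0 < sInf (decayRates f V χ s r) := by
  have hcont : Continuous fun q : E × F => -fderiv ℝ V q.1 (f q.1 q.2) :=
    (((hV.continuous_fderiv one_ne_zero).comp continuous_fst).clm_apply hf).neg
  have hcompact : IsCompact (decayRates f V χ s r) :=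
    ((isCompact_setOf_norm_le_of_gain_le hV.continuous hχ s r).image hcont).insert 1
  obtain h1 | ⟨q, hq, hqeq⟩ := hcompact.sInf_mem (insert_nonempty _ _)
  · exact h1 ▸ one_pos
  · exact hqeq ▸ neg_pos.2 (hdec q.1 q.2 (hs.trans_le hq.2.1) hq.2.2)

lemma exists_decay_rate (hf : Continuous (Function.uncurry f)) (hV : ContDiff ℝ 1 V)
    (hV0 : ∀ ξ, 0 ≤ V ξ) (hχ : IsClassKInfty χ)
    (hdec : ∀ ξ μ, 0 < V ξ → χ ‖μ‖ ≤ V ξ → fderiv ℝ V ξ (f ξ μ) < 0) :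
    ∃ α : ℝ → ℝ → ℝ, (∀ r, IsClassK fun s => α s r) ∧ (∀ s, 0 ≤ s → Antitone (α s)) ∧
      ∀ ξ μ, χ ‖μ‖ ≤ V ξ → fderiv ℝ V ξ (f ξ μ) ≤ -α (V ξ) ‖ξ‖ := by
  have hnonpos : ∀ ξ μ, χ ‖μ‖ ≤ V ξ → fderiv ℝ V ξ (f ξ μ) ≤ 0 := fun ξ μ hμ => by
    rcases (hV0 ξ).eq_or_lt with hξ | hξ
    · simp [fderiv_eq_zero_of_nonneg hV0 hξ.symm]
    · exact (hdec ξ μ hξ hμ).le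
  have hbdd := bddBelow_decayRates hnonpos
  have hsInf : ∀ {s s' r r'}, s ≤ s' → r' ≤ r →
      sInf (decayRates f V χ s r) ≤ sInf (decayRates f V χ s' r') := fun hs hr =>
    csInf_le_csInf (hbdd _ _) (insert_nonempty _ _) (decayRates_subset hs hr)
  obtain ⟨α, hα, hanti, hle⟩ := exists_isClassK_le_of_monotone
    (ψ := fun s r => sInf (decayRates f V χ s r)) (fun r s s' hs => hsInf hs le_rfl)
    (fun s r r' hr => hsInf le_rfl hr) fun r s hs => sInf_decayRates_pos hf hV hχ hdec hs r
  refine ⟨α, hα, hanti, fun ξ μ hμ => ?_⟩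
  rcases (hV0 ξ).eq_or_lt with hξ | hξ
  · have hα0 : α 0 ‖ξ‖ = 0 := (hα ‖ξ‖).2.2
    simp [fderiv_eq_zero_of_nonneg hV0 hξ.symm, ← hξ, hα0]
  · exact le_neg.1 ((hle ‖ξ‖ (V ξ) hξ).trans (csInf_le (hbdd _ _)
      (mem_insert_of_mem _ ⟨(ξ, μ), ⟨le_rfl, le_rfl, hμ⟩, rfl⟩)))

end decayRates

end decayRate

section posPartSeries

/-! ### Series of positive parts -/

variable {c r : ℕ → ℝ}

lemma summable_mul_posPart (hc : Summable c) (hc0 : ∀ k, 0 ≤ c k) (hr : ∀ k, 0 ≤ r k) (s : ℝ) :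
    Summable fun k => c k * max (s - r k) 0 :=
  .of_nonneg_of_le (fun k => mul_nonneg (hc0 k) (le_max_right _ _))
    (fun k => mul_le_mul_of_nonneg_left
      (max_le ((sub_le_self _ (hr k)).trans (le_abs_self s)) (abs_nonneg s)) (hc0 k))
    (hc.mul_right |s|)

lemma lipschitzWith_tsum_posPart (hc : Summable c) (hc0 : ∀ k, 0 ≤ c k) (hr : ∀ k, 0 ≤ r k) :
    LipschitzWith (∑' k, c k).toNNReal fun s => ∑' k, c k * max (s - r k) 0 := by
  have hsum := summable_mul_posPart hc hc0 hr
  refine LipschitzWith.of_dist_le_mul fun s t => ?_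
  rw [Real.coe_toNNReal _ (tsum_nonneg hc0), Real.dist_eq, Real.dist_eq,
    ← (hsum s).tsum_sub (hsum t), ← Real.norm_eq_abs]
  refine tsum_of_norm_bounded (hc.hasSum.mul_right |s - t|) fun k => ?_
  rw [← mul_sub, norm_mul, Real.norm_of_nonneg (hc0 k), Real.norm_eq_abs]
  refine mul_le_mul_of_nonneg_left ?_ (hc0 k)
  simpa only [sub_sub_sub_cancel_right] using abs_max_sub_max_le_abs (s - r k) (t - r k) 0

lemma strictMonoOn_tsum_posPart (hc : Summable c) (hc0 : ∀ k, 0 < c k) (hr : ∀ k, 0 ≤ r k)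
    (hr0 : Tendsto r atTop (𝓝 0)) :
    StrictMonoOn (fun s => ∑' k, c k * max (s - r k) 0) (Ici 0) := by
  have hsum := summable_mul_posPart hc (fun k => (hc0 k).le) hr
  intro s hs t _ hst
  obtain ⟨k, hk⟩ := (hr0.eventually_lt_const ((mem_Ici.1 hs).trans_lt hst)).exists
  refine Summable.tsum_lt_tsum (i := k) (fun j => ?_) ?_ (hsum s) (hsum t)
  · exact mul_le_mul_of_nonneg_left (max_le_max_right _ (by linarith)) (hc0 j).le
  · exact mul_lt_mul_of_pos_left (max_lt (lt_max_of_lt_left (by linarith))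
      (lt_max_of_lt_left (by linarith))) (hc0 k)

lemma isClassKInfty_tsum_posPart (hc : Summable c) (hc0 : ∀ k, 0 < c k) (hr : ∀ k, 0 ≤ r k)
    (hr0 : Tendsto r atTop (𝓝 0)) : IsClassKInfty fun s => ∑' k, c k * max (s - r k) 0 := by
  have hc0' : ∀ k, 0 ≤ c k := fun k => (hc0 k).le
  refine ⟨⟨(lipschitzWith_tsum_posPart hc hc0' hr).continuous.continuousOn,
    strictMonoOn_tsum_posPart hc hc0 hr hr0, ?_⟩, ?_⟩
  · have hzero : ∀ k, max (0 - r k) 0 = 0 := fun k => max_eq_right (by linarith [hr k])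
    simp only [hzero, mul_zero, tsum_zero]
  · have hlin : Tendsto (fun s => c 0 * (s - r 0)) atTop atTop :=
      (tendsto_atTop_add_const_right _ _ tendsto_id).const_mul_atTop (hc0 0)
    refine tendsto_atTop_mono (fun s => ?_) hlin
    exact (mul_le_mul_of_nonneg_left (le_max_left _ _) (hc0' 0)).trans
      ((summable_mul_posPart hc hc0' hr s).le_tsum 0 fun k _ =>
        mul_nonneg (hc0' k) (le_max_right _ _))

end posPartSeries

section converse

/-! ### Output stability implies a Lyapunov function -/

open scoped ContDiff

lemma neg_of_hasSum_fderiv {E : Type*} [NormedAddCommGroup E] [NormedSpace ℝ E] {W : ℕ → E → ℝ}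
    (hW : ∀ k ξ, 0 ≤ W k ξ) {c : ℕ → ℝ} (hc : ∀ k, 0 < c k) {ξ v : E} {L : ℝ}
    (hL : HasSum (fun k => c k * fderiv ℝ (W k) ξ v) L)
    (hneg : ∀ k, 0 < W k ξ → fderiv ℝ (W k) ξ v < 0) (hpos : 0 < ∑' k, c k * W k ξ) : L < 0 := by
  have hnonpos : ∀ k, c k * fderiv ℝ (W k) ξ v ≤ 0 := fun k => by
    refine mul_nonpos_of_nonneg_of_nonpos (hc k).le ?_
    rcases (hW k ξ).eq_or_lt with hξ | hξ
    · simp [fderiv_eq_zero_of_nonneg (hW k) hξ.symm]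
    · exact (hneg k hξ).le
  obtain ⟨k, hk⟩ : ∃ k, 0 < W k ξ := by
    by_contra! hall
    have hzero : ∀ k, W k ξ = 0 := fun k => (hall k).antisymm (hW k ξ)
    simp [hzero] at hpos
  exact hasSum_lt hnonpos (mul_neg_of_pos_of_neg (hc k) (hneg k hk)) hL hasSum_zero

variable {n m p : ℕ}
  {f : EuclideanSpace ℝ (Fin n) → EuclideanSpace ℝ (Fin m) → EuclideanSpace ℝ (Fin n)}
  {h : EuclideanSpace ℝ (Fin n) → EuclideanSpace ℝ (Fin p)}
  {x : ℝ → EuclideanSpace ℝ (Fin n) → (ℝ → EuclideanSpace ℝ (Fin m)) → EuclideanSpace ℝ (Fin n)}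
  {β : ℝ → ℝ → ℝ} {γ σ : ℝ → ℝ}

lemma IsOutputDecay.exists_smooth_storage (hD : IsOutputDecay h x β γ σ) (hB : IsBIBS f x)
    (hf : LocallyLipschitz (Function.uncurry f)) (hh : LocallyLipschitz h) (hh0 : h 0 = 0) :
    ∃ V : EuclideanSpace ℝ (Fin n) → ℝ, ContDiff ℝ ∞ V ∧ (∀ ξ, 0 ≤ V ξ) ∧
      (∃ α, IsClassKInfty α ∧ ∀ ξ, α (outputValue h x γ ξ) ≤ V ξ) ∧
      (∀ ξ, V ξ ≤ 2 * outputValue h x γ ξ) ∧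
      ∀ ξ μ, 0 < V ξ → 12 * γ ‖μ‖ ≤ V ξ → fderiv ℝ V ξ (f ξ μ) < 0 := by
  choose W hW hW0 hWle hleW hWneg using fun k : ℕ =>
    hD.exists_smooth_level hB hf hh hh0 (r := (1 / 2) ^ k) (by positivity)
  obtain ⟨c, hc, hcle, hsum, hV, hderiv⟩ := exists_smooth_series hW (B := outputValue h x γ)
    fun k ξ => (abs_of_nonneg (hW0 k ξ)).trans_le (hWle k ξ)
  have hcsum : Summable c :=
    .of_nonneg_of_le (fun k => (hc k).le) hcle summable_geometric_two
  have hlevel : ∀ k : ℕ, (0 : ℝ) ≤ 4 * (1 / 2) ^ k := fun k => by positivity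
  have hlevel0 : Tendsto (fun k : ℕ => (4 : ℝ) * (1 / 2) ^ k) atTop (𝓝 0) := by
    simpa only [mul_zero] using
      (tendsto_pow_atTop_nhds_zero_of_lt_one one_half_pos.le one_half_lt_one).const_mul (4 : ℝ)
  have hVle : ∀ ξ, ∑' k, c k * W k ξ ≤ 2 * outputValue h x γ ξ := fun ξ =>
    hasSum_le (fun k => mul_le_mul (hcle k) (hWle k ξ) (hW0 k ξ) (by positivity))
      (hsum ξ).hasSum (hasSum_geometric_two.mul_right _)
  refine ⟨fun ξ => ∑' k, c k * W k ξ, hV,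
    fun ξ => tsum_nonneg fun k => mul_nonneg (hc k).le (hW0 k ξ),
    ⟨_, isClassKInfty_tsum_posPart hcsum hc hlevel hlevel0, fun ξ => ?_⟩, hVle,
    fun ξ μ hpos hμ => neg_of_hasSum_fderiv hW0 hc (hderiv ξ (f ξ μ))
      (fun k hk => hWneg k ξ μ hk (by linarith [hVle ξ])) hpos⟩
  exact (summable_mul_posPart hcsum (fun k => (hc k).le) hlevel _).tsum_le_tsum
    (fun k => mul_le_mul_of_nonneg_left (max_le (hleW k ξ) (hW0 k ξ)) (hc k).le) (hsum ξ)

lemma IsOLIOS.exists_isOLIOSLyapunov (hO : IsOLIOS h x) (hB : IsBIBS f x)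
    (hf : LocallyLipschitz (Function.uncurry f)) (hh : LocallyLipschitz h) (hh0 : h 0 = 0) :
    ∃ V, IsOLIOSLyapunov f h V := by
  obtain ⟨β, γ, σ, hD⟩ := hO.exists_isOutputDecay
  obtain ⟨V, hV, hV0, ⟨α, hα, hαV⟩, hVle, hneg⟩ := hD.exists_smooth_storage hB hf hh hh0
  have hχ : IsClassKInfty fun s => 12 * γ s :=
    ⟨hD.gain.1.const_mul (by norm_num), hD.gain.2.const_mul_atTop (by norm_num)⟩
  obtain ⟨α₃, hα₃, hanti, hdecay⟩ :=
    exists_decay_rate hf.continuous (hV.of_le (mod_cast le_top)) hV0 hχ hneg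
  refine ⟨V, hV, hV0, ⟨α, fun s => 4 * σ s + s, hα, (hD.overshoot.const_mul four_pos).add_id,
    fun ξ => ⟨(hα.1.mono (norm_nonneg _) (hD.norm_le_outputValue hB ξ)).trans (hαV ξ), ?_⟩⟩,
    _, hχ.1, α₃, fun r _ => hα₃ r, fun s hs => (hanti s hs).antitoneOn _, hdecay⟩
  simp only
  linarith [hVle ξ, hD.outputValue_le_overshoot ξ, norm_nonneg (h ξ)]

end converse

/-- A BIBS system is OLIOS if and only if it admits an OLIOS-Lyapunov function. -/
theorem olios_iff_exists_oliosLyapunov {n m p : ℕ}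
    (f : EuclideanSpace ℝ (Fin n) → EuclideanSpace ℝ (Fin m) → EuclideanSpace ℝ (Fin n))
    (h : EuclideanSpace ℝ (Fin n) → EuclideanSpace ℝ (Fin p))
    (x : ℝ → EuclideanSpace ℝ (Fin n) → (ℝ → EuclideanSpace ℝ (Fin m)) →
      EuclideanSpace ℝ (Fin n))
    (hf : LocallyLipschitz fun q : EuclideanSpace ℝ (Fin n) × EuclideanSpace ℝ (Fin m) =>
      f q.1 q.2)
    (hf0 : f 0 0 = 0)
    (hh : LocallyLipschitz h) (hh0 : h 0 = 0)
    (hBIBS : IsBIBS f x) :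
    IsOLIOS h x ↔ ∃ V : EuclideanSpace ℝ (Fin n) → ℝ, IsOLIOSLyapunov f h V :=
  ⟨fun hO => hO.exists_isOLIOSLyapunov hBIBS hf hh hh0,
    fun ⟨_, hV⟩ => hBIBS.isOLIOS_of_isOLIOSLyapunov hf hh.continuous hh0 hV⟩
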